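/- arXiv:math/0501306 — 2 statements merged into one kernel-verified Lean document; each statement's English description precedes it below -/
import Mathlib

section
/- Let I be a closed interval and let f : I → I be continuous. If f has a cycle with over-rotation number ρ, and r is a rational number with ρ < r ≤ 1/2, then f has a cycle with over-rotation number r. Consequently, the set of over-rotation numbers of all cycles of f of period larger than 1 is either the intersection of ℚ with an interval whose one endpoint is 1/2, or the singleton {1/2}, or empty. -/
open Function

/-- The number of sign changes of `f y - y` as `y` runs along the cyclic sequence
`x, f x, …, f^[q-1] x, f^[q] x (= x)`. -/
noncomputable def overCount (f : ℝ → ℝ) (x : ℝ) (q : ℕ) : ℕ :=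
  ((Finset.range q).filter fun i =>
    (f (f^[i] x) - f^[i] x) * (f (f^[i + 1] x) - f^[i + 1] x) < 0).card

/-- The over-rotation number of the cycle of a periodic point `x` of `f`. -/
noncomputable def overNum (f : ℝ → ℝ) (x : ℝ) : ℚ :=
  (overCount f x (minimalPeriod f x) : ℚ) / (2 * (minimalPeriod f x : ℚ))

/-- The set of over-rotation numbers of all cycles of period larger than `1` of `f` on `I`. -/
noncomputable def overNumSet (f : ℝ → ℝ) (I : Set ℝ) : Set ℚ :=
  {r | ∃ x ∈ I, 2 ≤ minimalPeriod f x ∧ overNum f x = r}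

namespace OverRot

open Set

variable {f : ℝ → ℝ}

lemma oc_eq_sum (f : ℝ → ℝ) (x : ℝ) (q : ℕ) : overCount f x q =
    ∑ i ∈ Finset.range q, if (f (f^[i] x) - f^[i] x) * (f (f^[i + 1] x) - f^[i + 1] x) < 0
      then 1 else 0 := by
  unfold overCount
  rw [Finset.card_filter]

lemma oc_zero (f : ℝ → ℝ) (x : ℝ) : overCount f x 0 = 0 := by
  rw [oc_eq_sum]; simp

lemma oc_one (f : ℝ → ℝ) (x : ℝ) : overCount f x 1 =
    if (f x - x) * (f (f x) - f x) < 0 then 1 else 0 := by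
  rw [oc_eq_sum]
  simp only [Finset.sum_range_one, iterate_zero_apply, zero_add, iterate_one]

lemma oc_add (f : ℝ → ℝ) (x : ℝ) (n m : ℕ) :
    overCount f x (n + m) = overCount f x n + overCount f (f^[n] x) m := by
  rw [oc_eq_sum, oc_eq_sum, oc_eq_sum, Finset.sum_range_add]
  congr 1
  apply Finset.sum_congr rfl
  intro i _
  have h1 : f^[n + i] x = f^[i] (f^[n] x) := by rw [add_comm, iterate_add_apply]
  have h2 : f^[n + i + 1] x = f^[i + 1] (f^[n] x) := by
    rw [show n + i + 1 = (i + 1) + n by ring, iterate_add_apply]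
  rw [h1, h2]

lemma oc_shift (f : ℝ → ℝ) (x : ℝ) (q k : ℕ) (h : f^[q] x = x) :
    overCount f (f^[k] x) q = overCount f x q := by
  have h1 := oc_add f x k q
  have h2 := oc_add f x q k
  rw [h] at h2
  rw [add_comm q k] at h2
  omega

lemma oc_mul (f : ℝ → ℝ) (x : ℝ) (q k : ℕ) (h : f^[q] x = x) :
    overCount f x (k * q) = k * overCount f x q := by
  induction k with
  | zero => simp [oc_zero]
  | succ k ih =>
    rw [Nat.succ_mul, add_comm, oc_add, h, ih]; ring

lemma oc_le (f : ℝ → ℝ) (x : ℝ) (q : ℕ) : overCount f x q ≤ q := by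
  unfold overCount
  exact (Finset.card_filter_le _ _).trans (by simp)

/-- `S` covers `T` after `n` steps, with `m` sign changes on the way. -/
def Cov (f : ℝ → ℝ) (S T : Set ℝ) (n m : ℕ) : Prop :=
  ∀ u v : ℝ, u ≤ v → Icc u v ⊆ T → ∃ u' v' : ℝ, u' ≤ v' ∧ Icc u' v' ⊆ S ∧
    f^[n] '' Icc u' v' = Icc u v ∧
    ∀ y ∈ Icc u' v', (∀ i, f (f^[i] y) ≠ f^[i] y) → overCount f y n = m

lemma Cov.refl (f : ℝ → ℝ) (S : Set ℝ) : Cov f S S 0 0 := by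
  intro u v h hS
  exact ⟨u, v, h, hS, by simp, fun y _ _ => oc_zero f y⟩

lemma Cov.trans {S T U : Set ℝ} {n m n' m' : ℕ} (h : Cov f S T n m) (h' : Cov f T U n' m') :
    Cov f S U (n + n') (m + m') := by
  intro u v huv hU
  obtain ⟨u1, v1, h1, hT, him, hc⟩ := h' u v huv hU
  obtain ⟨u2, v2, h2, hS, him2, hc2⟩ := h u1 v1 h1 hT
  refine ⟨u2, v2, h2, hS, ?_, ?_⟩
  · rw [add_comm, iterate_add, image_comp, him2, him]
  · intro y hy hn
    rw [oc_add, hc2 y hy hn, hc]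
    · rw [← him2]; exact mem_image_of_mem _ hy
    · intro i
      have := hn (i + n)
      rwa [iterate_add_apply] at this

lemma Cov.mono {S S' T T' : Set ℝ} {n m : ℕ} (h : Cov f S T n m) (hS : S ⊆ S') (hT : T' ⊆ T) :
    Cov f S' T' n m := by
  intro u v huv hU
  obtain ⟨u1, v1, h1, h2, h3, h4⟩ := h u v huv (hU.trans hT)
  exact ⟨u1, v1, h1, h2.trans hS, h3, h4⟩

lemma Cov.iter {S : Set ℝ} {n m : ℕ} (h : Cov f S S n m) (k : ℕ) :
    Cov f S S (k * n) (k * m) := by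
  induction k with
  | zero => simpa using Cov.refl f S
  | succ k ih =>
    rw [Nat.succ_mul, Nat.succ_mul]
    exact ih.trans h

lemma exact_aux (hf : Continuous f) {p q u v : ℝ} (hpq : p ≤ q) (huv : u ≤ v)
    (hp : f p ≤ u) (hq : v ≤ f q) :
    ∃ u' v' : ℝ, u' ≤ v' ∧ Icc u' v' ⊆ Icc p q ∧ f '' Icc u' v' = Icc u v := by
  have c1 : IsCompact (Icc p q ∩ {y | v ≤ f y}) :=
    isCompact_Icc.inter_right (isClosed_le continuous_const hf)
  obtain ⟨β, ⟨hβ1, hβ2⟩, hβ3⟩ := c1.exists_isLeast ⟨q, ⟨hpq, le_rfl⟩, hq⟩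
  have c2 : IsCompact (Icc p β ∩ {y | f y ≤ u}) :=
    isCompact_Icc.inter_right (isClosed_le hf continuous_const)
  obtain ⟨α, ⟨hα1, hα2⟩, hα3⟩ := c2.exists_isGreatest ⟨p, ⟨le_rfl, hβ1.1⟩, hp⟩
  simp only [mem_ofPred_eq] at hβ2 hα2
  have hfα : f α = u := by
    obtain ⟨t, ht, hft⟩ := intermediate_value_Icc hα1.2 hf.continuousOn
      (show u ∈ Icc (f α) (f β) from ⟨hα2, huv.trans hβ2⟩)
    have : t ≤ α := hα3 ⟨⟨hα1.1.trans ht.1, ht.2⟩, hft.le⟩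
    have : t = α := le_antisymm this ht.1
    rw [← this, hft]
  have hfβ : f β = v := by
    obtain ⟨t, ht, hft⟩ := intermediate_value_Icc hα1.2 hf.continuousOn
      (show v ∈ Icc (f α) (f β) from ⟨hα2.trans huv, hβ2⟩)
    have : β ≤ t := hβ3 ⟨⟨hα1.1.trans ht.1, ht.2.trans hβ1.2⟩, hft.ge⟩
    have : t = β := le_antisymm ht.2 this
    rw [← this, hft]
  refine ⟨α, β, hα1.2, Icc_subset_Icc hα1.1 hβ1.2, ?_⟩
  apply Subset.antisymm
  · rintro _ ⟨y, hy, rfl⟩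
    constructor
    · by_contra hlt
      push Not at hlt
      have : y ≤ α := hα3 ⟨⟨hα1.1.trans hy.1, hy.2⟩, hlt.le⟩
      have : y = α := le_antisymm this hy.1
      rw [this, hfα] at hlt
      exact lt_irrefl _ hlt
    · by_contra hlt
      push Not at hlt
      have : β ≤ y := hβ3 ⟨⟨hα1.1.trans hy.1, hy.2.trans hβ1.2⟩, hlt.le⟩
      have : y = β := le_antisymm hy.2 this
      rw [this, hfβ] at hlt
      exact lt_irrefl _ hlt
  · have := intermediate_value_Icc hα1.2 hf.continuousOn
    rwa [hfα, hfβ] at this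

lemma exact_sub (hf : Continuous f) {p q u v : ℝ} (huv : u ≤ v)
    (h : Icc u v ⊆ uIcc (f p) (f q)) :
    ∃ u' v' : ℝ, u' ≤ v' ∧ Icc u' v' ⊆ uIcc p q ∧ f '' Icc u' v' = Icc u v := by
  wlog hpq : p ≤ q generalizing p q
  · rw [uIcc_comm] at h ⊢
    exact this h (le_of_not_ge hpq)
  rw [uIcc_of_le hpq]
  have hu := h ⟨le_rfl, huv⟩
  have hv := h ⟨huv, le_rfl⟩
  rcases le_total (f p) (f q) with hfp | hfp
  · rw [uIcc_of_le hfp] at hu hv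
    exact exact_aux hf hpq huv hu.1 hv.2
  · rw [uIcc_of_ge hfp] at hu hv
    obtain ⟨u', v', h1, h2, h3⟩ := exact_aux (f := fun y => - f y) hf.neg hpq (neg_le_neg huv)
      (neg_le_neg hv.2) (neg_le_neg hu.1)
    refine ⟨u', v', h1, h2, ?_⟩
    have : f '' Icc u' v' = (fun y => -y) '' ((fun y => - f y) '' Icc u' v') := by
      rw [image_image]; simp
    rw [this, h3]
    simp

lemma cov_one (hf : Continuous f) {p q : ℝ} {T : Set ℝ} {σ τ : ℝ}
    (hT : T ⊆ uIcc (f p) (f q)) (hσ0 : σ ≠ 0) (hτ0 : τ ≠ 0)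
    (hσ : ∀ y ∈ uIcc p q, 0 ≤ σ * (f y - y)) (hτ : ∀ y ∈ T, 0 ≤ τ * (f y - y)) :
    Cov f (uIcc p q) T 1 (if σ * τ < 0 then 1 else 0) := by
  intro u v huv hU
  obtain ⟨u', v', h1, h2, h3⟩ := exact_sub hf huv (hU.trans hT)
  refine ⟨u', v', h1, h2, by simpa using h3, ?_⟩
  intro y hy hn
  have n0 : f y - y ≠ 0 := sub_ne_zero.2 (hn 0)
  have n1 : f (f y) - f y ≠ 0 := sub_ne_zero.2 (hn 1)
  have s0 := hσ y (h2 hy)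
  have s1 := hτ (f y) (hU (h3 ▸ mem_image_of_mem f hy))
  have s0' : 0 < σ * (f y - y) := lt_of_le_of_ne s0 (mul_ne_zero hσ0 n0).symm
  have s1' : 0 < τ * (f (f y) - f y) := lt_of_le_of_ne s1 (mul_ne_zero hτ0 n1).symm
  rw [oc_one]
  have key : 0 < (σ * τ) * ((f y - y) * (f (f y) - f y)) := by
    have := mul_pos s0' s1'
    nlinarith
  have : (f y - y) * (f (f y) - f y) < 0 ↔ σ * τ < 0 := by
    rcases pos_and_pos_or_neg_and_neg_of_mul_pos key with ⟨a, b⟩ | ⟨a, b⟩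
    · exact ⟨fun h => absurd h (not_lt.2 b.le), fun h => absurd h (not_lt.2 a.le)⟩
    · exact ⟨fun _ => a, fun _ => b⟩
  simp only [this]

lemma fixIVT {g : ℝ → ℝ} (hg : Continuous g) {x y : ℝ} (h : (g x - x) * (g y - y) ≤ 0) :
    ∃ t ∈ uIcc x y, g t = t := by
  have hc : ContinuousOn (fun t => g t - t) (uIcc x y) := (hg.sub continuous_id).continuousOn
  have h0 : (0 : ℝ) ∈ uIcc (g x - x) (g y - y) := by
    rw [mem_uIcc]
    rcases mul_nonpos_iff.1 h with ⟨a, b⟩ | ⟨a, b⟩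
    · exact Or.inr ⟨b, a⟩
    · exact Or.inl ⟨a, b⟩
  obtain ⟨t, ht, hft⟩ := intermediate_value_uIcc hc h0
  exact ⟨t, ht, by simpa [sub_eq_zero] using hft⟩

lemma cov_fix (hf : Continuous f) {l h : ℝ} {N m : ℕ} (hC : Cov f (uIcc l h) (uIcc l h) N m)
    (hnf : ∀ y ∈ uIcc l h, f y ≠ y) :
    ∃ z, f z ≠ z ∧ f^[N] z = z ∧
      ((∀ i, f (f^[i] z) ≠ f^[i] z) → overCount f z N = m) := by
  obtain ⟨u, v, huv, h1, h2, h3⟩ := hC (min l h) (max l h) min_le_max (by rfl)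
  have hsub : Icc u v ⊆ f^[N] '' Icc u v := by rw [h2]; exact h1
  obtain ⟨α, hα, hα'⟩ := hsub ⟨le_rfl, huv⟩
  obtain ⟨β, hβ, hβ'⟩ := hsub ⟨huv, le_rfl⟩
  obtain ⟨t, ht, hft⟩ := fixIVT (hf.iterate N) (x := α) (y := β) (by
    rw [hα', hβ']
    exact mul_nonpos_of_nonpos_of_nonneg (by linarith [hα.1]) (by linarith [hβ.2]))
  have htm : t ∈ Icc u v := by
    have : uIcc α β ⊆ Icc u v := by
      rw [← uIcc_of_le huv] at *
      exact uIcc_subset_uIcc hα hβ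
    exact this ht
  exact ⟨t, hnf t (h1 htm), hft, h3 t htm⟩

/-- `e` is a fixed point, and it is the only one in the interval between `x` and `e`. -/
def IsV (f : ℝ → ℝ) (x e : ℝ) : Prop :=
  f e = e ∧ f x ≠ x ∧ ∀ y ∈ uIcc x e, f y = y → y = e

lemma nearest (hf : Continuous f) {x c : ℝ} (hx : f x ≠ x) (hc : f c = c) :
    ∃ e ∈ uIcc x c, IsV f x e := by
  have c1 : IsCompact (uIcc x c ∩ {y | f y = y}) :=
    isCompact_uIcc.inter_right (isClosed_eq hf continuous_id)
  obtain ⟨e, ⟨he1, he2⟩, he3⟩ := c1.exists_isMinOn ⟨c, right_mem_uIcc, hc⟩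
    (f := fun y => |y - x|) (by fun_prop)
  refine ⟨e, he1, he2, hx, ?_⟩
  intro y hy hfy
  have hy2 : y ∈ uIcc x c := (uIcc_subset_uIcc left_mem_uIcc he1) hy
  have hm : |e - x| ≤ |y - x| := he3 ⟨hy2, hfy⟩
  rcases mem_uIcc.1 hy with ⟨a, b⟩ | ⟨a, b⟩
  · rw [abs_of_nonneg (by linarith), abs_of_nonneg (by linarith)] at hm
    linarith
  · rw [abs_of_nonpos (by linarith), abs_of_nonpos (by linarith)] at hm
    linarith

lemma IsV.sign (hf : Continuous f) {x e : ℝ} (h : IsV f x e) :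
    ∀ y ∈ uIcc x e, 0 ≤ (f x - x) * (f y - y) := by
  intro y hy
  by_contra hlt
  push Not at hlt
  obtain ⟨t, ht, hft⟩ := fixIVT hf hlt.le
  have hte : t = e := h.2.2 t ((uIcc_subset_uIcc left_mem_uIcc hy) ht) hft
  rw [hte] at ht
  have : y = e := by
    rcases mem_uIcc.1 hy with ⟨a, b⟩ | ⟨a, b⟩ <;> rcases mem_uIcc.1 ht with ⟨c, d⟩ | ⟨c, d⟩ <;>
      linarith
  rw [this, h.1] at hlt
  simp at hlt

lemma IsV.ne {x e : ℝ} (h : IsV f x e) : e ≠ x := by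
  rintro rfl
  exact h.2.1 h.1

/-- The fixed point `e` lies on the side of `x` to which `x` is moved. -/
def TypeK (f : ℝ → ℝ) (x e : ℝ) : Prop := 0 < (f x - x) * (e - x)

lemma typeK_unique {x e e' : ℝ} (h : IsV f x e) (h' : IsV f x e') (k : TypeK f x e)
    (k' : TypeK f x e') : e = e' := by
  unfold TypeK at k k'
  have hcase : e ∈ uIcc x e' ∨ e' ∈ uIcc x e := by
    rcases pos_and_pos_or_neg_and_neg_of_mul_pos k with ⟨a, b⟩ | ⟨a, b⟩ <;>
    rcases pos_and_pos_or_neg_and_neg_of_mul_pos k' with ⟨a', b'⟩ | ⟨a', b'⟩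
    · rcases le_total e e' with l | l
      · left; rw [mem_uIcc]; left; constructor <;> linarith
      · right; rw [mem_uIcc]; left; constructor <;> linarith
    · linarith
    · linarith
    · rcases le_total e e' with l | l
      · right; rw [mem_uIcc]; right; constructor <;> linarith
      · left; rw [mem_uIcc]; right; constructor <;> linarith
  rcases hcase with hc | hc
  · exact h'.2.2 e hc h.1
  · exact (h.2.2 e' hc h'.1).symm

lemma step (hf : Continuous f) {x e : ℝ} (h : IsV f x e) (hn : f (f x) ≠ f x) :
    ∃ e', IsV f (f x) e' ∧ Cov f (uIcc x e) (uIcc (f x) e') 1 (overCount f x 1) ∧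
      e' ∈ uIcc (f x) e ∧ ((f x - x) * (f (f x) - f x) < 0 → TypeK f (f x) e') := by
  obtain ⟨e', he', hV⟩ := nearest hf hn h.1
  refine ⟨e', hV, ?_, he', ?_⟩
  · rw [oc_one]
    apply cov_one hf _ (sub_ne_zero.2 h.2.1) (sub_ne_zero.2 hn) (h.sign hf) (hV.sign hf)
    rw [h.1]
    exact uIcc_subset_uIcc left_mem_uIcc he'
  · intro hs
    unfold TypeK
    have hne := hV.ne
    rcases mul_neg_iff.1 hs with ⟨a, b⟩ | ⟨a, b⟩
    · apply mul_pos_of_neg_of_neg b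
      by_contra hlt
      have hgt : f x < e' := lt_of_le_of_ne (by linarith) hne.symm
      have : f x ∈ uIcc x e := by
        rw [mem_uIcc]
        rcases mem_uIcc.1 he' with ⟨c, d⟩ | ⟨c, d⟩
        · left; constructor <;> linarith
        · linarith
      linarith [h.sign hf _ this]
    · apply mul_pos b
      by_contra hlt
      have hgt : e' < f x := lt_of_le_of_ne (by linarith) hne
      have : f x ∈ uIcc x e := by
        rw [mem_uIcc]
        rcases mem_uIcc.1 he' with ⟨c, d⟩ | ⟨c, d⟩
        · linarith
        · right; constructor <;> linarith
      linarith [h.sign hf _ this]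

lemma path (hf : Continuous f) {x e : ℝ} (h : IsV f x e) (hn : ∀ i, f (f^[i] x) ≠ f^[i] x)
    (n : ℕ) : ∃ e', IsV f (f^[n] x) e' ∧
      Cov f (uIcc x e) (uIcc (f^[n] x) e') n (overCount f x n) := by
  induction n with
  | zero => exact ⟨e, h, by rw [oc_zero]; exact Cov.refl f _⟩
  | succ n ih =>
    obtain ⟨e1, h1, h2⟩ := ih
    have hn' : f (f (f^[n] x)) ≠ f (f^[n] x) := by
      have := hn (n + 1)
      rwa [iterate_succ_apply'] at this
    obtain ⟨e2, h3, h4, -, -⟩ := step hf h1 hn'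
    refine ⟨e2, by rwa [iterate_succ_apply'], ?_⟩
    rw [iterate_succ_apply', oc_add]
    exact h2.trans h4

lemma pair {O : Set ℝ} (hO : O.Finite) (hmap : ∀ y ∈ O, f y ∈ O) (hn : ∀ y ∈ O, f y ≠ y)
    {w v : ℝ} (hw : w ∈ O) (hv : v ∈ O) (hwf : w < f w) (hvf : f v < v) (hwv : w < v) :
    ∃ x ∈ O, ∃ y ∈ O, w ≤ x ∧ x < y ∧ y ≤ v ∧ x < f x ∧ f y < y ∧ y ≤ f x ∧ f y ≤ x := by
  obtain ⟨x, ⟨hxO, hxv, hxf⟩, hmax⟩ := Set.exists_max_image {y | y ∈ O ∧ y ≤ v ∧ y < f y} id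
    (hO.subset fun y hy => hy.1) ⟨w, hw, hwv.le, hwf⟩
  have hxv' : x < v := lt_of_le_of_ne hxv (by rintro rfl; linarith)
  obtain ⟨y, ⟨hyO, hxy⟩, hmin⟩ := Set.exists_min_image {y | y ∈ O ∧ x < y} id
    (hO.subset fun y hy => hy.1) ⟨v, hv, hxv'⟩
  simp only [id, mem_ofPred_eq, and_imp] at hmax hmin
  have hyv : y ≤ v := hmin v hv hxv'
  have hyf : f y < y := by
    by_contra hle
    have : y < f y := lt_of_le_of_ne (not_lt.1 hle) (hn y hyO).symm
    linarith [hmax y hyO hyv this]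
  refine ⟨x, hxO, y, hyO, hmax w hw hwv.le hwf, hxy, hyv, hxf, hyf,
    hmin _ (hmap x hxO) hxf, ?_⟩
  by_contra hlt
  push Not at hlt
  linarith [hmin _ (hmap y hyO) hlt]

lemma loopA (hf : Continuous f) {w' κ : ℝ} {t : ℕ} (hper : f^[t + 2] w' = w')
    (hn : ∀ i, f (f^[i] w') ≠ f^[i] w') (h1 : w' < f w') (h2 : f w' < f (f w'))
    (h3 : f (f (f w')) < f (f w')) (hκ : IsV f (f (f w')) κ) (hκl : f w' < κ)
    (hκr : κ < f (f w')) :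
    ∃ l h : ℝ, (∀ y ∈ uIcc l h, f y ≠ y) ∧ ∃ t1 t2 m1 m2 : ℕ,
      Cov f (uIcc l h) (uIcc (f (f w')) κ) t1 m1 ∧
      Cov f (uIcc (f (f w')) κ) (uIcc l h) t2 m2 ∧ t1 + t2 = t + 2 ∧
      m1 + m2 = overCount f w' (t + 2) := by
  have hnv : ∀ i, f (f^[i] (f (f w'))) ≠ f^[i] (f (f w')) := fun i => hn (i + 2)
  obtain ⟨e', he', hC'⟩ := path hf hκ hnv t
  have hvt : f^[t] (f (f w')) = w' := hper
  rw [hvt] at he' hC'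
  obtain ⟨e, he, hC, hee, -⟩ := step hf he' (hn 1)
  obtain ⟨e'', he'', hC2, -, hK⟩ := step hf he (hn 2)
  have hκK : TypeK f (f (f w')) κ := mul_pos_of_neg_of_neg (by linarith) (by linarith)
  have hK'' := hK (mul_neg_of_pos_of_neg (by linarith) (by linarith))
  obtain rfl : e'' = κ := typeK_unique he'' hκ hK'' hκK
  have hcount : overCount f w' (t + 2) =
      overCount f w' 1 + overCount f (f w') 1 + overCount f (f (f w')) t := by
    rw [show t + 2 = 1 + (1 + t) by ring, oc_add, oc_add]
    simp only [iterate_one]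
    ring
  rcases lt_or_gt_of_ne he.ne with hlt | hgt
  · -- the vertex lies behind
    obtain ⟨d, hd, hfd⟩ := intermediate_value_Icc hlt.le hf.continuousOn
      (show e'' ∈ Icc (f e) (f (f w')) by rw [he.1]; constructor <;> linarith)
    have hde : d ≠ e := by rintro rfl; rw [he.1] at hfd; linarith
    have hde' : e < d := lt_of_le_of_ne hd.1 hde.symm
    have hsub : uIcc (f w') d ⊆ uIcc (f w') e :=
      uIcc_subset_uIcc left_mem_uIcc (by rw [mem_uIcc]; right; exact hd)
    refine ⟨f w', d, ?_, 1, t + 1, overCount f (f w') 1, overCount f (f (f w')) t +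
      overCount f w' 1, ?_, (hC'.trans hC).mono (by rfl) hsub, by ring, by omega⟩
    · intro y hy hfy
      have hye := he.2.2 y (hsub hy) hfy
      rw [uIcc_of_ge hd.2] at hy
      linarith [hy.1]
    · rw [oc_one]
      exact cov_one hf (by rw [hfd]) (sub_ne_zero.2 (hn 1)) (sub_ne_zero.2 (hn 2))
        (fun y hy => he.sign hf y (hsub hy)) (hκ.sign hf)
  · have hee' : e = e' := by
      rcases mem_uIcc.1 hee with ⟨a, b⟩ | ⟨a, b⟩
      · exact he'.2.2 e (by rw [mem_uIcc]; left; constructor <;> linarith) he.1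
      · linarith
    subst hee'
    have hsub : uIcc w' (f w') ⊆ uIcc w' e :=
      uIcc_subset_uIcc left_mem_uIcc (by rw [mem_uIcc]; left; constructor <;> linarith)
    have hev : e ≤ f (f w') := by
      by_contra hlt
      push Not at hlt
      have := he.sign hf (f (f w')) (by rw [mem_uIcc]; left; constructor <;> linarith)
      have h5 := mul_neg_of_pos_of_neg (sub_pos.2 h2) (sub_neg.2 h3)
      linarith
    have hC3 : Cov f (uIcc w' (f w')) (uIcc (f w') e) 1 (overCount f w' 1) := by
      rw [oc_one]
      exact cov_one hf (uIcc_subset_uIcc left_mem_uIcc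
        (by rw [mem_uIcc]; left; constructor <;> linarith)) (sub_ne_zero.2 (hn 0))
        (sub_ne_zero.2 (hn 1)) (fun y hy => he'.sign hf y (hsub hy)) (he.sign hf)
    refine ⟨w', f w', ?_, 1 + 1, t, _, _, hC3.trans hC2, hC'.mono (by rfl) hsub, by ring,
      by omega⟩
    intro y hy hfy
    have hye := he'.2.2 y (hsub hy) hfy
    rw [uIcc_of_le h1.le] at hy
    linarith [hy.2]

lemma loopB (hf : Continuous f) {w' κ : ℝ} {t : ℕ} (hper : f^[t + 2] w' = w')
    (hn : ∀ i, f (f^[i] w') ≠ f^[i] w') (h2 : f w' < f (f w'))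
    (h3 : f (f (f w')) < f (f w')) (hκ : IsV f (f (f w')) κ)
    (hκr : κ < f (f w')) :
    ∃ L M : ℕ, 0 < L ∧ ∀ j : ℕ,
      Cov f (uIcc (f (f w')) κ) (uIcc (f (f w')) κ) (L + j * 2) (M + j * 2) := by
  have hnv : ∀ i, f (f^[i] (f (f w'))) ≠ f^[i] (f (f w')) := fun i => hn (i + 2)
  have hκK : TypeK f (f (f w')) κ := mul_pos_of_neg_of_neg (by linarith) (by linarith)
  obtain ⟨e, he, hC⟩ := path hf hκ hnv (t + 1)
  have hvt : f^[t + 1] (f (f w')) = f w' := by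
    have : f^[t + 1] (f (f w')) = f (f^[t + 2] w') := by
      rw [← iterate_succ_apply' f (t + 2) w']; rfl
    rw [this, hper]
  rw [hvt] at he hC
  -- the orbit
  have hPer : IsPeriodicPt f (t + 2) w' := hper
  have hOfin : (Set.range fun i => f^[i] w').Finite := by
    apply ((Finset.range (t + 2)).image (fun i => f^[i] w')).finite_toSet.subset
    rintro _ ⟨i, rfl⟩
    simp only [Finset.coe_image, Finset.coe_range, mem_image, mem_Iio]
    exact ⟨i % (t + 2), Nat.mod_lt _ (by omega), hPer.iterate_mod_apply i⟩
  obtain ⟨x, ⟨ix, hix⟩, y, ⟨iy, hiy⟩, hwx, hxy, hyv, hxf, hyf, hyx, hyx'⟩ :=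
    pair (f := f) hOfin
      (by rintro _ ⟨i, rfl⟩; exact ⟨i + 1, iterate_succ_apply' f i w'⟩)
      (by rintro _ ⟨i, rfl⟩; exact hn i) (w := f w') (v := f (f w')) ⟨1, rfl⟩ ⟨2, rfl⟩ h2 h3 h2
  simp only at hix hiy
  obtain ⟨c, hc, hfc⟩ := fixIVT hf (x := x) (y := y)
    (mul_nonpos_of_nonneg_of_nonpos (by linarith) (by linarith))
  rw [uIcc_of_le hxy.le] at hc
  obtain ⟨e1, he1m, he1⟩ := nearest hf hxf.ne' hfc
  obtain ⟨e2, he2m, he2⟩ := nearest hf hyf.ne hfc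
  rw [uIcc_of_le hc.1] at he1m
  rw [uIcc_of_ge hc.2] at he2m
  have hm1 := he1m.1
  have hm2 := he1m.2
  have hm3 := he2m.1
  have hm4 := he2m.2
  have hee2 : e ≤ e2 := by
    by_contra hlt
    push Not at hlt
    have := he.2.2 e2 (by rw [mem_uIcc]; left; constructor <;> linarith) he2.1
    linarith
  have sx : f x - x ≠ 0 := sub_ne_zero.2 hxf.ne'
  have sy : f y - y ≠ 0 := sub_ne_zero.2 hyf.ne
  have E1 := cov_one (T := uIcc y e2) hf (p := f w') (q := e)
    (uIcc_subset_uIcc (by rw [mem_uIcc, he.1]; right; constructor <;> linarith)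
      (by rw [mem_uIcc, he.1]; right; constructor <;> linarith))
    (sub_ne_zero.2 he.2.1) sy (he.sign hf) (he2.sign hf)
  have E2 := cov_one (T := uIcc x e1) hf (p := y) (q := e2)
    (uIcc_subset_uIcc (by rw [mem_uIcc, he2.1]; left; constructor <;> linarith)
      (by rw [mem_uIcc, he2.1]; left; constructor <;> linarith))
    sy sx (he2.sign hf) (he1.sign hf)
  have E3 := cov_one (T := uIcc y e2) hf (p := x) (q := e1)
    (uIcc_subset_uIcc (by rw [mem_uIcc, he1.1]; right; constructor <;> linarith)
      (by rw [mem_uIcc, he1.1]; right; constructor <;> linarith))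
    sx sy (he1.sign hf) (he2.sign hf)
  have hneg := mul_neg_of_pos_of_neg (sub_pos.2 hxf) (sub_neg.2 hyf)
  rw [if_pos (by rw [mul_comm]; exact hneg)] at E2
  rw [if_pos hneg] at E3
  -- back from `y`
  have hny : ∀ i, f (f^[i] y) ≠ f^[i] y := by
    intro i
    rw [← hiy, ← iterate_add_apply]
    exact hn _
  -- number of steps needed
  obtain ⟨n, hnn⟩ : ∃ n, f^[n] y = f w' := by
    refine ⟨iy * (t + 1) + 1, ?_⟩
    rw [← hiy, ← iterate_add_apply, show iy * (t + 1) + 1 + iy = 1 + iy * (t + 2) by ring,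
      iterate_add_apply]
    have : f^[iy * (t + 2)] w' = w' := hPer.const_mul iy
    rw [this]; rfl
  obtain ⟨e3, he3, hC3⟩ := path hf he2 hny n
  rw [hnn] at he3 hC3
  obtain ⟨e4, he4, hC4, -, hK⟩ := step hf he3 (hn 2)
  obtain rfl : e4 = κ := typeK_unique he4 hκ
    (hK (mul_neg_of_pos_of_neg (by linarith) (by linarith))) hκK
  obtain ⟨mm, hmm⟩ : ∃ mm, Cov f (uIcc (f w') e) (uIcc y e2) 1 mm := ⟨_, E1⟩
  refine ⟨(t + 1) + 1 + (n + 1), overCount f (f (f w')) (t + 1) + mm +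
    (overCount f y n + overCount f (f w') 1), by omega, fun j => ?_⟩
  have := ((hC.trans hmm).trans ((E2.trans E3).iter j)).trans (hC3.trans hC4)
  convert this using 1
  · ring
  · ring

lemma main_UUD (hf : Continuous f) {w' : ℝ} {q : ℕ} (hq : 0 < q) (hper : f^[q] w' = w')
    (hn : ∀ i, f (f^[i] w') ≠ f^[i] w') (h1 : w' < f w') (h2 : f w' < f (f w'))
    (h3 : f (f (f w')) < f (f w')) {k n : ℕ} (hkn : 2 * k < n)
    (hlt : overCount f w' q * n < 2 * k * q) :
    ∃ z, f z ≠ z ∧ ∃ N, 0 < N ∧ f^[N] z = z ∧ overCount f z N * n = 2 * k * N := by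
  obtain ⟨t, rfl⟩ : ∃ t, q = t + 2 := by
    rcases q with _ | _ | t
    · omega
    · simp at hper; linarith
    · exact ⟨t, rfl⟩
  obtain ⟨c, hc, hfc⟩ := fixIVT hf (x := f w') (y := f (f w'))
    (mul_nonpos_of_nonneg_of_nonpos (by linarith) (by linarith))
  rw [uIcc_of_le h2.le] at hc
  obtain ⟨κ, hκm, hκ⟩ := nearest hf h3.ne hfc
  rw [uIcc_of_ge hc.2] at hκm
  have hκr : κ < f (f w') := lt_of_le_of_ne hκm.2 hκ.ne
  have hκl : f w' < κ := by
    apply lt_of_le_of_ne (hc.1.trans hκm.1)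
    intro h
    have := hκ.1
    rw [← h] at this
    exact hn 1 this
  obtain ⟨l, h, hfree, t1, t2, m1, m2, A1, A2, ht, hm⟩ :=
    loopA hf hper hn h1 h2 h3 hκ hκl hκr
  obtain ⟨L, M, hL, hB⟩ := loopB hf hper hn h2 h3 hκ hκr
  have A := A1.trans A2
  rw [ht, hm] at A
  have hB' := (A1.trans (hB (k * (t1 + L + t2)))).trans A2
  set MA := overCount f w' (t + 2) with hMA
  set q := t + 2 with hqdef
  set J := k * (t1 + L + t2) with hJ
  set lB := t1 + (L + J * 2) + t2 with hlB
  set MB := m1 + (M + J * 2) + m2 with hMB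
  have hge : 2 * k * lB ≤ MB * n := by
    calc 2 * k * lB = 2 * J * (2 * k + 1) := by rw [hlB, hJ]; ring
      _ ≤ 2 * J * n := Nat.mul_le_mul_left _ hkn
      _ ≤ MB * n := Nat.mul_le_mul_right _ (by omega)
  obtain ⟨α, hα⟩ := Nat.exists_eq_add_of_le hge
  obtain ⟨β, hβ⟩ := Nat.exists_eq_add_of_lt hlt
  have C := (A.iter α).trans (hB'.iter (β + 1))
  obtain ⟨z, hz1, hz2, hz3⟩ := cov_fix hf C hfree
  have hNpos : 0 < α * q + (β + 1) * lB := by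
    have : 0 < lB := by omega
    positivity
  refine ⟨z, hz1, _, hNpos, hz2, ?_⟩
  rw [hz3]
  · have e1 : (MA : ℤ) * n + β + 1 = 2 * k * q := by exact_mod_cast hβ.symm
    have e2 : (MB : ℤ) * n = 2 * k * lB + α := by exact_mod_cast hα
    have : ((α : ℤ) * MA + (β + 1) * MB) * n = 2 * k * (α * q + (β + 1) * lB) := by
      linear_combination (α : ℤ) * e1 + (β + 1 : ℤ) * e2
    exact_mod_cast this
  · intro i hi
    apply hz1
    have hstay : ∀ j, f^[j] (f^[i] z) = f^[i] z := fun j => iterate_fixed hi j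
    have hPz : IsPeriodicPt f (α * q + (β + 1) * lB) z := hz2
    have h5 : f^[(α * q + (β + 1) * lB) * i] z = z := hPz.mul_const i
    obtain ⟨s, hs⟩ : ∃ s, (α * q + (β + 1) * lB) * i = s + i :=
      ⟨(α * q + (β + 1) * lB) * i - i, by
        have : i ≤ (α * q + (β + 1) * lB) * i := Nat.le_mul_of_pos_left _ hNpos
        omega⟩
    rw [hs, iterate_add_apply, hstay] at h5
    rw [h5] at hi
    exact hi

lemma exists_two (hf : Continuous f) {a x : ℝ} (ha : ∀ y, a ≤ f y) (hx : x < f x)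
    (hx2 : f (f x) ≤ x) : ∃ z, f z ≠ z ∧ f (f z) = z := by
  by_contra hcon
  push Not at hcon
  have hno : ∀ z, f (f z) = z → f z = z := by
    intro z hz
    by_contra h
    exact hcon z h hz
  have hff : Continuous fun y => f (f y) := hf.comp hf
  by_cases hd : ∃ d, d ≤ x ∧ f d = d
  · obtain ⟨d0, hd0, hfd0⟩ := hd
    obtain ⟨d, hdm, hd⟩ := nearest hf hx.ne' hfd0
    rw [uIcc_of_ge hd0] at hdm
    obtain ⟨y, hy, hfy⟩ := intermediate_value_Icc hdm.2 hf.continuousOn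
      (show x ∈ Icc (f d) (f x) by rw [hd.1]; exact ⟨hdm.2, hx.le⟩)
    obtain ⟨t, ht, hft⟩ := fixIVT hff (x := y) (y := x)
      (mul_nonpos_of_nonneg_of_nonpos (by rw [hfy]; linarith [hy.2]) (by linarith))
    rw [uIcc_of_le hy.2] at ht
    have hft' := hno t hft
    have htd := hd.2.2 t (by rw [uIcc_of_ge hdm.2]; exact ⟨hy.1.trans ht.1, ht.2⟩) hft'
    have hyd : y = d := le_antisymm (htd ▸ ht.1) hy.1
    rw [hyd, hd.1] at hfy
    exact hd.ne hfy
  · push Not at hd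
    have hm1 : min a x ≤ a := min_le_left _ _
    have hm2 : min a x ≤ x := min_le_right _ _
    obtain ⟨t, ht, hft⟩ := fixIVT hff (x := min a x - 1) (y := x)
      (mul_nonpos_of_nonneg_of_nonpos (by linarith [ha (f (min a x - 1))]) (by linarith))
    rw [uIcc_of_le (by linarith)] at ht
    exact hd t ht.2 (hno t hft)

lemma cycle_two (hf : Continuous f) {a x : ℝ} {q : ℕ} (ha : ∀ y, a ≤ f y) (hq : 0 < q)
    (hper : f^[q] x = x) (hn : ∀ i, f (f^[i] x) ≠ f^[i] x) : ∃ z, f z ≠ z ∧ f (f z) = z := by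
  have hPer : IsPeriodicPt f q x := hper
  have hOfin : (Set.range fun i => f^[i] x).Finite := by
    apply ((Finset.range q).image (fun i => f^[i] x)).finite_toSet.subset
    rintro _ ⟨i, rfl⟩
    simp only [Finset.coe_image, Finset.coe_range, mem_image, mem_Iio]
    exact ⟨i % q, Nat.mod_lt _ hq, hPer.iterate_mod_apply i⟩
  have hmap : ∀ y ∈ (Set.range fun i => f^[i] x), f y ∈ (Set.range fun i => f^[i] x) := by
    rintro _ ⟨i, rfl⟩; exact ⟨i + 1, iterate_succ_apply' f i x⟩
  have hnf : ∀ y ∈ (Set.range fun i => f^[i] x), f y ≠ y := by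
    rintro _ ⟨i, rfl⟩; exact hn i
  obtain ⟨w, hwO, hw⟩ := Set.exists_min_image _ id hOfin ⟨x, 0, rfl⟩
  obtain ⟨v, hvO, hv⟩ := Set.exists_max_image _ id hOfin ⟨x, 0, rfl⟩
  have hwf : w < f w := lt_of_le_of_ne (hw _ (hmap w hwO)) (hnf w hwO).symm
  have hvf : f v < v := lt_of_le_of_ne (hv _ (hmap v hvO)) (hnf v hvO)
  have hwv : w < v := lt_of_lt_of_le hwf (hv _ (hmap w hwO))
  obtain ⟨x1, -, y1, -, -, hxy, -, hxf, hyf, h1, h2⟩ := pair hOfin hmap hnf hwO hvO hwf hvf hwv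
  obtain ⟨c, hc, hfc⟩ := fixIVT hf (x := x1) (y := y1)
    (mul_nonpos_of_nonneg_of_nonpos (by linarith) (by linarith))
  rw [uIcc_of_le hxy.le] at hc
  obtain ⟨s, hs, hfs⟩ := intermediate_value_Icc' hc.1 hf.continuousOn
    (show y1 ∈ Icc (f c) (f x1) by rw [hfc]; exact ⟨hc.2, h1⟩)
  refine exists_two hf ha (x := s) ?_ (by rw [hfs]; linarith [hs.1])
  rw [hfs]
  have hcy : c ≠ y1 := by rintro rfl; linarith
  have : c < y1 := lt_of_le_of_ne hc.2 hcy
  linarith [hs.2]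

lemma main_UU (hf : Continuous f) {x : ℝ} {q : ℕ} (hq : 0 < q) (hper : f^[q] x = x)
    (hn : ∀ i, f (f^[i] x) ≠ f^[i] x) (h1 : x < f x) (h2 : f x < f (f x))
    {k n : ℕ} (hkn : 2 * k < n) (hlt : overCount f x q * n < 2 * k * q) :
    ∃ z, f z ≠ z ∧ ∃ N, 0 < N ∧ f^[N] z = z ∧ overCount f z N * n = 2 * k * N := by
  classical
  have hex : ∃ j, f (f^[j] x) < f^[j] x := by
    by_contra hcon
    push Not at hcon
    have hmono : StrictMono fun i => f^[i] x := by
      apply strictMono_nat_of_lt_succ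
      intro i
      rw [iterate_succ_apply']
      exact lt_of_le_of_ne (hcon i) (hn i).symm
    have := hmono hq
    simp only [iterate_zero_apply, hper] at this
    exact lt_irrefl _ this
  have hfind := Nat.find_spec hex
  have hmin := fun i (hi : i < Nat.find hex) => Nat.find_min hex hi
  generalize Nat.find hex = j at hfind hmin
  rcases j with _ | _ | j
  · simp at hfind; linarith
  · simp at hfind; linarith
  have hup : ∀ i, i < j + 2 → f^[i] x < f (f^[i] x) := fun i hi =>
    lt_of_le_of_ne (not_lt.1 (hmin i hi)) (hn i).symm
  have g1 := hup j (by omega)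
  have g2 := hup (j + 1) (by omega)
  rw [iterate_succ_apply'] at g2
  rw [iterate_succ_apply', iterate_succ_apply'] at hfind
  refine main_UUD hf (w' := f^[j] x) hq ?_ ?_ g1 g2 hfind hkn ?_
  · rw [← iterate_add_apply, add_comm, iterate_add_apply, hper]
  · intro i
    rw [← iterate_add_apply]
    exact hn _
  · rwa [oc_shift f x q j hper]

lemma neg_iter (f : ℝ → ℝ) (x : ℝ) (i : ℕ) : (fun t => -f (-t))^[i] (-x) = -(f^[i] x) := by
  induction i with
  | zero => simp
  | succ i ih => rw [iterate_succ_apply', iterate_succ_apply', ih]; simp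

lemma neg_oc (f : ℝ → ℝ) (x : ℝ) (q : ℕ) :
    overCount (fun t => -f (-t)) (-x) q = overCount f x q := by
  rw [oc_eq_sum, oc_eq_sum]
  apply Finset.sum_congr rfl
  intro i _
  rw [neg_iter, neg_iter]
  have : (-f (- -f^[i] x) - -f^[i] x) * (-f (- -f^[i + 1] x) - -f^[i + 1] x) =
      (f (f^[i] x) - f^[i] x) * (f (f^[i + 1] x) - f^[i + 1] x) := by
    rw [neg_neg, neg_neg]; ring
  rw [this]

lemma main_lt (hf : Continuous f) {x : ℝ} {q : ℕ} (hq : 0 < q) (hper : f^[q] x = x)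
    (hn : ∀ i, f (f^[i] x) ≠ f^[i] x)
    {k n : ℕ} (hkn : 2 * k < n) (hlt : overCount f x q * n < 2 * k * q) :
    ∃ z, f z ≠ z ∧ ∃ N, 0 < N ∧ f^[N] z = z ∧ overCount f z N * n = 2 * k * N := by
  -- there is a step without sign change
  obtain ⟨i, hi⟩ : ∃ i, 0 ≤ (f (f^[i] x) - f^[i] x) * (f (f^[i + 1] x) - f^[i + 1] x) := by
    by_contra hcon
    push Not at hcon
    have : overCount f x q = q := by
      rw [oc_eq_sum, Finset.sum_congr rfl (fun i _ => if_pos (hcon i))]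
      simp
    rw [this] at hlt
    have : 2 * k * q ≤ n * q := Nat.mul_le_mul_right _ hkn.le
    rw [mul_comm n q] at this
    omega
  have hper' : f^[q] (f^[i] x) = f^[i] x := by
    rw [← iterate_add_apply, add_comm, iterate_add_apply, hper]
  have hn' : ∀ j, f (f^[j] (f^[i] x)) ≠ f^[j] (f^[i] x) := by
    intro j
    rw [← iterate_add_apply]
    exact hn _
  rw [← oc_shift f x q i hper] at hlt
  rw [iterate_succ_apply'] at hi
  generalize f^[i] x = y at *
  have m0 : f y - y ≠ 0 := sub_ne_zero.2 (hn' 0)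
  have m1 : f (f y) - f y ≠ 0 := sub_ne_zero.2 (hn' 1)
  have hpos := lt_of_le_of_ne hi (mul_ne_zero m0 m1).symm
  rcases pos_and_pos_or_neg_and_neg_of_mul_pos hpos with ⟨a, b⟩ | ⟨a, b⟩
  · exact main_UU hf hq hper' hn' (by linarith) (by linarith) hkn hlt
  · obtain ⟨z, hz, N, hN, hzN, hc⟩ := main_UU (f := fun t => -f (-t)) (x := -y) (q := q)
      (by fun_prop) hq (by rw [neg_iter, hper'])
      (by
        intro j
        rw [neg_iter]
        simpa using hn' j)
      (by simp only [neg_neg]; linarith) (by simp only [neg_neg]; linarith) hkn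
      (by rwa [neg_oc])
    refine ⟨-z, ?_, N, hN, ?_, ?_⟩
    · intro h
      apply hz
      simp only [h, neg_neg]
    · have := neg_iter f (-z) N
      rw [neg_neg, hzN] at this
      linarith
    · have := neg_oc f (-z) N
      rw [neg_neg] at this
      rwa [this] at hc

lemma overNum_of {z : ℝ} {N : ℕ} (hz : f z ≠ z) (hN : 0 < N) (hzN : f^[N] z = z) :
    2 ≤ minimalPeriod f z ∧ overNum f z = (overCount f z N : ℚ) / (2 * N) := by
  have hP : IsPeriodicPt f N z := hzN
  have hpos : 0 < minimalPeriod f z := hP.minimalPeriod_pos hN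
  have hne : minimalPeriod f z ≠ 1 := by
    intro h
    exact hz (minimalPeriod_eq_one_iff_isFixedPt.1 h)
  obtain ⟨s, hs⟩ := hP.minimalPeriod_dvd
  have hs0 : s ≠ 0 := by rintro rfl; omega
  refine ⟨by omega, ?_⟩
  unfold overNum
  have hm := oc_mul f z (minimalPeriod f z) s (iterate_minimalPeriod)
  rw [mul_comm, ← hs] at hm
  rw [hm]
  have h3 : (N : ℚ) = minimalPeriod f z * s := by exact_mod_cast hs
  rw [h3]
  have h1 : (minimalPeriod f z : ℚ) ≠ 0 := by exact_mod_cast hpos.ne'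
  have h2 : (s : ℚ) ≠ 0 := by exact_mod_cast hs0
  push_cast
  field_simp

lemma nonfixed {x : ℝ} (hx : 2 ≤ minimalPeriod f x) (i : ℕ) : f (f^[i] x) ≠ f^[i] x := by
  intro h
  have h1 : minimalPeriod f (f^[i] x) = minimalPeriod f x :=
    minimalPeriod_apply_iterate (minimalPeriod_pos_iff_mem_periodicPts.1 (by omega)) i
  have h2 : minimalPeriod f (f^[i] x) = 1 := minimalPeriod_eq_one_iff_isFixedPt.2 h
  omega

lemma main_cont (hf : Continuous f) {a x : ℝ} (ha : ∀ y, a ≤ f y)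
    (hx : 2 ≤ minimalPeriod f x) (r : ℚ) (hr : overNum f x < r) (hr2 : r ≤ 1 / 2) :
    ∃ y, 2 ≤ minimalPeriod f y ∧ overNum f y = r := by
  have hq : 0 < minimalPeriod f x := by omega
  have hper : f^[minimalPeriod f x] x = x := iterate_minimalPeriod
  have hr0 : 0 < r := lt_of_le_of_lt (by unfold overNum; positivity) hr
  rcases eq_or_lt_of_le hr2 with rfl | hlt
  · obtain ⟨z, hz, hzz⟩ := cycle_two hf ha hq hper (nonfixed hx)
    obtain ⟨h1, h2⟩ := overNum_of (N := 2) hz (by norm_num) (by simpa using hzz)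
    refine ⟨z, h1, ?_⟩
    rw [h2]
    have : overCount f z 2 = 2 := by
      have hneg : (f z - z) * (z - f z) < 0 := by
        have : 0 < (f z - z) ^ 2 := by
          have := sub_ne_zero.2 hz
          positivity
        nlinarith
      rw [show 2 = 1 + 1 from rfl, oc_add, oc_one, oc_one]
      simp only [iterate_one, hzz]
      rw [if_pos hneg, if_pos (by rw [mul_comm]; exact hneg)]
    rw [this]; norm_num
  · obtain ⟨k, hk⟩ : ∃ k : ℕ, r.num = k := ⟨r.num.toNat, by
      rw [Int.toNat_of_nonneg (Rat.num_nonneg.2 hr0.le)]⟩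
    have hd : (0 : ℚ) < r.den := by exact_mod_cast r.den_pos
    have hrk : r = (k : ℚ) / r.den := by
      conv_lhs => rw [← Rat.num_div_den r]
      rw [hk]; simp
    generalize r.den = n at hrk hd
    have hkn : 2 * k < n := by
      rw [hrk, div_lt_div_iff₀ hd (by norm_num)] at hlt
      have : (2 * k : ℚ) < n := by linarith
      exact_mod_cast this
    have hq' : (0 : ℚ) < minimalPeriod f x := by exact_mod_cast hq
    have hl : overCount f x (minimalPeriod f x) * n < 2 * k * minimalPeriod f x := by
      unfold overNum at hr
      rw [hrk, div_lt_div_iff₀ (by positivity) hd] at hr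
      have : (overCount f x (minimalPeriod f x) * n : ℚ) < 2 * k * minimalPeriod f x := by
        linarith
      exact_mod_cast this
    obtain ⟨z, hz, N, hN, hzN, hc⟩ := main_lt hf hq hper (nonfixed hx) hkn hl
    obtain ⟨h1, h2⟩ := overNum_of hz hN hzN
    refine ⟨z, h1, ?_⟩
    have hN' : (0 : ℚ) < N := by exact_mod_cast hN
    rw [h2, hrk, div_eq_div_iff (by positivity) hd.ne']
    have : (overCount f z N * n : ℚ) = 2 * k * N := by exact_mod_cast hc
    linarith

lemma transfer {f F : ℝ → ℝ} {I : Set ℝ} (hF : ∀ y ∈ I, F y = f y) (hm : MapsTo f I I)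
    {x : ℝ} (hx : x ∈ I) : minimalPeriod F x = minimalPeriod f x ∧ overNum F x = overNum f x := by
  have hit : ∀ i, F^[i] x = f^[i] x ∧ f^[i] x ∈ I := by
    intro i
    induction i with
    | zero => exact ⟨rfl, hx⟩
    | succ i ih =>
      rw [iterate_succ_apply', iterate_succ_apply', ih.1]
      exact ⟨hF _ ih.2, hm ih.2⟩
  have hp : minimalPeriod F x = minimalPeriod f x := by
    apply minimalPeriod_eq_minimalPeriod_iff.2
    intro n
    unfold IsPeriodicPt IsFixedPt
    rw [(hit n).1]
  refine ⟨hp, ?_⟩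
  unfold overNum
  rw [hp, oc_eq_sum, oc_eq_sum]
  congr 2
  apply Finset.sum_congr rfl
  intro i _
  rw [(hit i).1, (hit (i + 1)).1, hF _ (hit i).2, hF _ (hit (i + 1)).2]

lemma part_one {a b : ℝ} (hab : a ≤ b) {f : ℝ → ℝ} (hf : ContinuousOn f (Icc a b))
    (hmaps : MapsTo f (Icc a b) (Icc a b)) (x : ℝ) (hx : x ∈ Icc a b)
    (hp : 2 ≤ minimalPeriod f x) (r : ℚ) (hr : overNum f x < r) (hr2 : r ≤ 1 / 2) :
    ∃ y ∈ Icc a b, 2 ≤ minimalPeriod f y ∧ overNum f y = r := by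
  set F : ℝ → ℝ := fun t => f (projIcc a b hab t) with hFdef
  have hFc : Continuous F :=
    hf.comp_continuous (continuous_subtype_val.comp continuous_projIcc) fun t => Subtype.prop _
  have hFm : ∀ t, F t ∈ Icc a b := fun t => hmaps (Subtype.prop _)
  have hFe : ∀ y ∈ Icc a b, F y = f y := by
    intro y hy
    simp only [hFdef, projIcc_of_mem hab hy]
  obtain ⟨t1, t2⟩ := transfer hFe hmaps hx
  obtain ⟨y, hy1, hy2⟩ := main_cont hFc (fun y => (hFm y).1) (x := x) (by rwa [t1]) r
    (by rwa [t2]) hr2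
  have hyI : y ∈ Icc a b := by
    have h1 : F^[minimalPeriod F y] y = y := iterate_minimalPeriod
    obtain ⟨s, hs⟩ : ∃ s, minimalPeriod F y = s + 1 := ⟨minimalPeriod F y - 1, by omega⟩
    rw [hs, iterate_succ_apply'] at h1
    rw [← h1]
    exact hFm _
  obtain ⟨t3, t4⟩ := transfer hFe hmaps hyI
  exact ⟨y, hyI, by rwa [← t3], by rwa [← t4]⟩

lemma part_two {S : Set ℚ} (h0 : ∀ r ∈ S, 0 ≤ r) (h1 : ∀ r ∈ S, r ≤ 1 / 2)
    (hup : ∀ s ∈ S, ∀ r : ℚ, s < r → r ≤ 1 / 2 → r ∈ S) :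
    S = ∅ ∨ S = {1 / 2} ∨ ∃ c : ℝ, S = {r : ℚ | c ≤ (r : ℝ) ∧ r ≤ 1 / 2} ∨
      S = {r : ℚ | c < (r : ℝ) ∧ r ≤ 1 / 2} := by
  rcases S.eq_empty_or_nonempty with he | hne
  · exact Or.inl he
  right; right
  set C : Set ℝ := (fun r : ℚ => (r : ℝ)) '' S with hC
  have hCne : C.Nonempty := hne.image _
  have hbdd : BddBelow C := by
    refine ⟨0, ?_⟩
    rintro _ ⟨r, hr, rfl⟩
    simp only
    exact_mod_cast h0 r hr
  refine ⟨sInf C, ?_⟩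
  have hlow : ∀ r ∈ S, sInf C ≤ (r : ℝ) := fun r hr => csInf_le hbdd ⟨r, hr, rfl⟩
  have hgt : ∀ r : ℚ, sInf C < r → r ≤ 1 / 2 → r ∈ S := by
    intro r hr hr2
    obtain ⟨_, ⟨s, hs, rfl⟩, hsr⟩ := exists_lt_of_csInf_lt hCne hr
    simp only at hsr
    exact hup s hs r (by exact_mod_cast hsr) hr2
  by_cases hm : sInf C ∈ C
  · left
    obtain ⟨s, hs, hsc⟩ := hm
    simp only at hsc
    ext r
    refine ⟨fun hr => ⟨hlow r hr, h1 r hr⟩, ?_⟩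
    rintro ⟨ha, hb⟩
    rcases eq_or_lt_of_le ha with h | h
    · have : s = r := by rw [h] at hsc; exact_mod_cast hsc
      rwa [← this]
    · exact hgt r h hb
  · right
    ext r
    refine ⟨fun hr => ⟨lt_of_le_of_ne (hlow r hr) ?_, h1 r hr⟩, fun h => hgt r h.1 h.2⟩
    intro h
    exact hm (h ▸ ⟨r, hr, rfl⟩)

lemma overNum_le (f : ℝ → ℝ) (x : ℝ) : overNum f x ≤ 1 / 2 := by
  unfold overNum
  have h : (overCount f x (minimalPeriod f x) : ℚ) ≤ minimalPeriod f x := by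
    exact_mod_cast oc_le f x _
  rcases Nat.eq_zero_or_pos (minimalPeriod f x) with h0 | h0
  · rw [h0]; norm_num
  · have : (0 : ℚ) < minimalPeriod f x := by exact_mod_cast h0
    rw [div_le_div_iff₀ (by positivity) (by norm_num)]
    linarith

lemma overNum_nonneg (f : ℝ → ℝ) (x : ℝ) : 0 ≤ overNum f x := by
  unfold overNum
  positivity

end OverRot

/-- If `f` has a cycle with over-rotation number `ρ` and `r` is rational with
`ρ < r ≤ 1/2`, then `f` has a cycle with over-rotation number `r`. Consequently, the set
of over-rotation numbers of all cycles of period larger than `1` is either the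
intersection of `ℚ` with an interval whose one endpoint is `1/2`, or `{1/2}`, or empty. -/
theorem overRotation_interval (a b : ℝ) (hab : a ≤ b) (f : ℝ → ℝ)
    (hf : ContinuousOn f (Set.Icc a b))
    (hmaps : Set.MapsTo f (Set.Icc a b) (Set.Icc a b)) :
    (∀ x ∈ Set.Icc a b, 2 ≤ minimalPeriod f x → ∀ r : ℚ,
        overNum f x < r → r ≤ 1 / 2 →
        ∃ y ∈ Set.Icc a b, 2 ≤ minimalPeriod f y ∧ overNum f y = r) ∧
    (overNumSet f (Set.Icc a b) = ∅ ∨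
      overNumSet f (Set.Icc a b) = {1 / 2} ∨
      ∃ c : ℝ,
        overNumSet f (Set.Icc a b) = {r : ℚ | c ≤ (r : ℝ) ∧ r ≤ 1 / 2} ∨
        overNumSet f (Set.Icc a b) = {r : ℚ | c < (r : ℝ) ∧ r ≤ 1 / 2}) := by
  refine ⟨OverRot.part_one hab hf hmaps, OverRot.part_two ?_ ?_ ?_⟩
  · rintro _ ⟨x, -, -, rfl⟩
    exact OverRot.overNum_nonneg f x
  · rintro _ ⟨x, -, -, rfl⟩
    exact OverRot.overNum_le f x
  · rintro _ ⟨x, hx, hp, rfl⟩ r hr hr2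
    exact OverRot.part_one hab hf hmaps x hx hp r hr hr2
end

section
/- Forcing among over-rotation pairs is a linear (total) ordering: for any two pairs of positive integers (p, q) and (r, s) with 2p ≤ q and 2r ≤ s, either every continuous interval map having a cycle with over-rotation pair (p, q) also has a cycle with over-rotation pair (r, s), or every continuous interval map having a cycle with over-rotation pair (r, s) also has a cycle with over-rotation pair (p, q). -/
open Function

/-- `f` has a cycle in `I` with over-rotation pair `(p, q)`. -/
def HasOverPair (f : ℝ → ℝ) (I : Set ℝ) (p q : ℕ) : Prop :=
  ∃ x ∈ I, minimalPeriod f x = q ∧ overCount f x q = 2 * p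

/-- The over-rotation pair `(p, q)` forces the over-rotation pair `(r, s)`: every
continuous map of a closed interval into itself having a cycle with over-rotation pair
`(p, q)` also has a cycle with over-rotation pair `(r, s)`. -/
def OrpForces (p q r s : ℕ) : Prop :=
  ∀ a b : ℝ, a ≤ b → ∀ f : ℝ → ℝ, ContinuousOn f (Set.Icc a b) →
    Set.MapsTo f (Set.Icc a b) (Set.Icc a b) →
    HasOverPair f (Set.Icc a b) p q → HasOverPair f (Set.Icc a b) r s

/-- horseshoe lemma -/
theorem horseshoe {g : ℝ → ℝ} (hg : Continuous g) (h0 : g 0 = 0) (hnn : ∀ t, 0 ≤ g t)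
    {s e : ℝ} (hs : 0 < s) (hse : s < e) (hgs : e ≤ g s) (hge : g e = 0) (m : ℕ) (hm : 0 < m) :
    ∃ t, 0 < t ∧ minimalPeriod g t = m := by
  obtain ⟨n, rfl⟩ : ∃ n, m = n + 1 := ⟨m - 1, by omega⟩
  set a : ℝ → ℝ := fun t => min s (g t) with ha
  have hac : Continuous a := by fun_prop
  have a0 : a 0 = 0 := by simp [ha, h0, hs.le]
  have as : a s = s := by simp [ha]; linarith
  have ae : a e = 0 := by simp [ha, hge, hs.le]
  have ai0 : ∀ i, a^[i] 0 = 0 := fun i => iterate_fixed a0 i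
  have ais : ∀ i, a^[i] s = s := fun i => iterate_fixed as i
  have hH : Continuous (fun t => g (a^[n] t) - t) := by
    have := hac.iterate n
    fun_prop
  have hHe : g (a^[n] e) - e ≤ 0 := by
    have : g (a^[n] e) = 0 := by
      cases n with
      | zero => simpa using hge
      | succ k => rw [iterate_succ_apply, ae, ai0, h0]
    rw [this]; linarith
  have hHs : 0 ≤ g (a^[n] s) - s := by rw [ais]; linarith
  obtain ⟨t, ⟨hts, hte⟩, htt⟩ := intermediate_value_Icc' hse.le hH.continuousOn ⟨hHe, hHs⟩
  have htt : g (a^[n] t) = t := by simpa [sub_eq_zero] using htt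
  have key : ∀ i, i < n → g (a^[i] t) ≤ s := by
    intro i hi
    by_contra hcon
    push Not at hcon
    have h1 : a^[i+1] t = s := by
      rw [iterate_succ_apply']; simp [ha]; exact hcon.le
    have h2 : a^[n] t = s := by
      obtain ⟨k, rfl⟩ : ∃ k, n = k + (i+1) := ⟨n - (i+1), by omega⟩
      rw [iterate_add_apply, h1, ais]
    rw [h2] at htt
    have : t = e := le_antisymm hte (by linarith)
    rw [this, iterate_succ_apply, ae, ai0] at h1
    linarith
  have key2 : ∀ i, i ≤ n → g^[i] t = a^[i] t := by
    intro i hi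
    induction i with
    | zero => rfl
    | succ i ih =>
      rw [iterate_succ_apply', iterate_succ_apply', ih (by omega)]
      have := key i (by omega)
      show g (a^[i] t) = min s (g (a^[i] t))
      rw [min_eq_right this]
  have hp : IsPeriodicPt g (n+1) t := by
    change g^[n+1] t = t
    rw [iterate_succ_apply', key2 n le_rfl, htt]
  have hts' : s < t := by
    rcases eq_or_lt_of_le hts with h | h
    · exfalso
      rw [← h, ais] at htt
      linarith
    · exact h
  refine ⟨t, by linarith, ?_⟩
  apply le_antisymm
  · exact hp.minimalPeriod_le (by omega)
  · by_contra hcon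
    push Not at hcon
    have hpos := hp.minimalPeriod_pos (by omega)
    obtain ⟨i, hi⟩ : ∃ i, minimalPeriod g t = i + 1 := ⟨minimalPeriod g t - 1, by omega⟩
    have h1 : g^[i+1] t = t := by rw [← hi]; exact isPeriodicPt_minimalPeriod g t
    rw [iterate_succ_apply', key2 i (by omega)] at h1
    have := key i (by omega)
    linarith

noncomputable def leg (F : ℝ → ℝ) (s : ℕ → ℝ) (i : ℕ) (t : ℝ) : ℝ :=
  max 0 (s (i + 1) * F (s i * t))

noncomputable def lcmp (F : ℝ → ℝ) (s : ℕ → ℝ) (j : ℕ) : ℕ → ℝ → ℝ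
  | 0, t => t
  | r + 1, t => leg F s (j + r) (lcmp F s j r t)

theorem leg_zero {F : ℝ → ℝ} (hF0 : F 0 = 0) (s : ℕ → ℝ) (i : ℕ) : leg F s i 0 = 0 := by
  simp [leg, hF0]

theorem leg_cont {F : ℝ → ℝ} (hF : Continuous F) (s : ℕ → ℝ) (i : ℕ) :
    Continuous (leg F s i) := by
  unfold leg; fun_prop

theorem lcmp_cont {F : ℝ → ℝ} (hF : Continuous F) (s : ℕ → ℝ) (j r : ℕ) :
    Continuous (lcmp F s j r) := by
  induction r with
  | zero => exact continuous_id
  | succ r ih => exact (leg_cont hF s (j + r)).comp ih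

theorem lcmp_zero {F : ℝ → ℝ} (hF0 : F 0 = 0) (s : ℕ → ℝ) (j r : ℕ) : lcmp F s j r 0 = 0 := by
  induction r with
  | zero => rfl
  | succ r ih => simp [lcmp, ih, leg_zero hF0]

theorem lcmp_add (F : ℝ → ℝ) (s : ℕ → ℝ) (j a b : ℕ) (t : ℝ) :
    lcmp F s j (a + b) t = lcmp F s (j + a) b (lcmp F s j a t) := by
  induction b with
  | zero => rfl
  | succ b ih =>
    rw [← add_assoc]
    simp only [lcmp]
    rw [ih, add_assoc]

theorem lcmp_shift {F : ℝ → ℝ} {s : ℕ → ℝ} {l : ℕ} (hper : ∀ i, s (i + l) = s i) (j b : ℕ) (t : ℝ) :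
    lcmp F s (j + l) b t = lcmp F s j b t := by
  induction b with
  | zero => rfl
  | succ b ih =>
    simp only [lcmp, ih, leg]
    rw [show j + l + b + 1 = (j + b + 1) + l by omega, show j + l + b = (j + b) + l by omega,
      hper, hper]

theorem lcmp_mul {F : ℝ → ℝ} {s : ℕ → ℝ} {l : ℕ} (hper : ∀ i, s (i + l) = s i) (j a : ℕ) (t : ℝ) :
    lcmp F s j (l * a) t = (lcmp F s j l)^[a] t := by
  induction a generalizing t with
  | zero => rfl
  | succ a ih =>
    rw [Nat.mul_succ, Nat.add_comm, lcmp_add, lcmp_shift hper, ih, iterate_succ_apply]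

theorem leg_nonneg (F : ℝ → ℝ) (s : ℕ → ℝ) (i : ℕ) (t : ℝ) : 0 ≤ leg F s i t := le_max_left _ _

theorem lcmp_nonneg (F : ℝ → ℝ) (s : ℕ → ℝ) (j r : ℕ) {t : ℝ} (ht : 0 ≤ t) : 0 ≤ lcmp F s j r t := by
  cases r with
  | zero => exact ht
  | succ r => exact leg_nonneg _ _ _ _

/-- `Rch`: from `[0,a]` at class `i` after `d` steps we reach `b`. -/
def Rch (F : ℝ → ℝ) (s : ℕ → ℝ) (i d : ℕ) (a b : ℝ) : Prop :=
  ∃ t, 0 ≤ t ∧ t ≤ a ∧ lcmp F s i d t = b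

theorem Rch.lower {F : ℝ → ℝ} (hF : Continuous F) (hF0 : F 0 = 0) {s : ℕ → ℝ} {i d : ℕ}
    {a b c : ℝ} (h : Rch F s i d a b) (hc : 0 ≤ c) (hcb : c ≤ b) : Rch F s i d a c := by
  obtain ⟨t, ht, hta, hb⟩ := h
  obtain ⟨x, ⟨hx0, hxt⟩, hx⟩ := intermediate_value_Icc ht (lcmp_cont hF s i d).continuousOn
    (show c ∈ Set.Icc (lcmp F s i d 0) (lcmp F s i d t) by rw [lcmp_zero hF0, hb]; exact ⟨hc, hcb⟩)
  exact ⟨x, hx0, hxt.trans hta, hx⟩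

theorem Rch.trans {F : ℝ → ℝ} (hF : Continuous F) (hF0 : F 0 = 0) {s : ℕ → ℝ} {i d d' : ℕ}
    {a b c : ℝ} (h : Rch F s i d a b) (h' : Rch F s (i + d) d' b c) :
    Rch F s i (d + d') a c := by
  obtain ⟨t', ht', htb, hc⟩ := h'
  obtain ⟨x, hx0, hxa, hx⟩ := h.lower hF hF0 ht' htb
  exact ⟨x, hx0, hxa, by rw [lcmp_add, hx, hc]⟩

theorem leg_horseshoe {F : ℝ → ℝ} (hF : Continuous F) (hF0 : F 0 = 0) {s : ℕ → ℝ} {l : ℕ}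
    (hl : 0 < l) (hper : ∀ i, s (i + l) = s i) (L : Set ℕ) (e : ℕ → ℝ) (hne : L.Nonempty)
    (hpos : ∀ j ∈ L, 0 < e j) (hz : ∀ j ∈ L, leg F s j (e j) = 0)
    (hreach : ∀ j ∈ L, ∃ d, 0 < d ∧ j + d ∈ L ∧ Rch F s j d (e j) (e (j + d)))
    (hmod : ∀ j ∈ L, ∀ j' ∈ L, j % l = j' % l → e j = e j') (m : ℕ) (hm : 0 < m) :
    ∃ j t, 0 < t ∧ minimalPeriod (lcmp F s j l) t = m := by
  obtain ⟨j0, hj0⟩ := hne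
  choose! d hd0 hdL hdR using hreach
  let jj : ℕ → ℕ := fun n => (fun j => j + d j)^[n] j0
  have hjs : ∀ n, jj (n + 1) = jj n + d (jj n) := fun n => by
    simp only [jj, iterate_succ_apply']
  have hjL : ∀ n, jj n ∈ L := by
    intro n
    induction n with
    | zero => exact hj0
    | succ n ih => rw [hjs]; exact hdL _ ih
  have hR : ∀ a b, ∃ D, jj (a + b + 1) = jj a + D ∧ 0 < D ∧
      Rch F s (jj a) D (e (jj a)) (e (jj (a + b + 1))) := by
    intro a b
    induction b with
    | zero =>
      refine ⟨d (jj a), hjs a, hd0 _ (hjL a), ?_⟩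
      rw [add_zero, hjs]; exact hdR _ (hjL a)
    | succ b ih =>
      obtain ⟨D, h1, h2, h3⟩ := ih
      refine ⟨D + d (jj (a + b + 1)), ?_, by omega, ?_⟩
      · rw [← add_assoc a b 1, hjs, h1]; omega
      · refine h3.trans hF hF0 ?_
        rw [← h1, ← add_assoc a b 1, hjs (a + b + 1)]
        exact hdR _ (hjL _)
  haveI : NeZero l := ⟨hl.ne'⟩
  obtain ⟨a, b, hab, hmodab⟩ : ∃ a b, a < b ∧ jj a % l = jj b % l := by
    obtain ⟨x, y, hxy, h⟩ := Finite.exists_ne_map_eq_of_infinite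
      (fun n => (⟨jj n % l, Nat.mod_lt _ hl⟩ : Fin l))
    have h' : jj x % l = jj y % l := by simpa using h
    rcases lt_or_gt_of_ne hxy with h1 | h1
    · exact ⟨x, y, h1, h'⟩
    · exact ⟨y, x, h1, h'.symm⟩
  obtain ⟨c, rfl⟩ : ∃ c, b = a + c + 1 := ⟨b - a - 1, by omega⟩
  obtain ⟨D, h1, h2, h3⟩ := hR a c
  set j := jj a with hj
  have hjm : j ∈ L := hjL a
  have hee : e (jj (a + c + 1)) = e j := hmod _ (hjL _) _ hjm hmodab.symm
  rw [hee] at h3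
  have hdiv : l ∣ D := by
    rw [h1] at hmodab
    have : j + 0 ≡ j + D [MOD l] := hmodab
    have := Nat.ModEq.add_left_cancel' j this
    exact (Nat.modEq_zero_iff_dvd.mp this.symm)
  obtain ⟨r, rfl⟩ := hdiv
  obtain ⟨t, ht0, hte, hct⟩ := h3
  rw [lcmp_mul hper] at hct
  set g := lcmp F s j l with hgdef
  have hr : 0 < r := Nat.pos_of_ne_zero (by rintro rfl; simp at h2)
  have g0 : g 0 = 0 := lcmp_zero hF0 s j l
  have gnn : ∀ t, 0 ≤ g t := by
    intro t
    obtain ⟨k, rfl⟩ : ∃ k, l = k + 1 := ⟨l - 1, by omega⟩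
    exact leg_nonneg _ _ _ _
  have gc : Continuous g := lcmp_cont hF s j l
  have ge : g (e j) = 0 := by
    have : g (e j) = lcmp F s (j+1) (l - 1) (lcmp F s j 1 (e j)) := by
      rw [← lcmp_add, hgdef]; congr 1; omega
    rw [this]
    have : lcmp F s j 1 (e j) = 0 := by simp [lcmp, hz j hjm]
    rw [this, lcmp_zero hF0]
  obtain ⟨x, hx0, hxe, hgx⟩ : ∃ x, 0 ≤ x ∧ x ≤ e j ∧ e j ≤ g x := by
    by_contra hcon
    push Not at hcon
    have : ∀ n, ∀ x, 0 ≤ x → x ≤ e j → g^[n+1] x < e j := by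
      intro n
      induction n with
      | zero => intro x h1 h2; exact hcon x h1 h2
      | succ n ih =>
        intro x h1 h2
        rw [iterate_succ_apply]
        exact ih _ (gnn _) (hcon x h1 h2).le
    have := this (r - 1) t ht0 hte
    rw [show r - 1 + 1 = r by omega, hct] at this
    exact lt_irrefl _ this
  have hep := hpos j hjm
  have hx0' : 0 < x := by
    rcases eq_or_lt_of_le hx0 with h | h
    · rw [← h, g0] at hgx; linarith
    · exact h
  have hxe' : x < e j := by
    rcases eq_or_lt_of_le hxe with h | h
    · rw [h, ge] at hgx; linarith
    · exact h
  obtain ⟨y, hy, hy'⟩ := horseshoe gc g0 gnn hx0' hxe' hgx ge m hm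
  exact ⟨j, y, hy, hy'⟩

noncomputable def cr (a b : ℝ) : ℕ := if a * b < 0 then 1 else 0

noncomputable def cnt (u : ℕ → ℝ) (N : ℕ) : ℕ := ∑ t ∈ Finset.range N, cr (u t) (u (t + 1))

noncomputable def sg (a : ℝ) : ℝ := if 0 < a then 1 else -1

theorem sg_cases (a : ℝ) : sg a = 1 ∨ sg a = -1 := by
  unfold sg; split_ifs <;> simp

theorem sg_mul_self (a : ℝ) : sg a * sg a = 1 := by
  rcases sg_cases a with h | h <;> rw [h] <;> norm_num

theorem sg_ne (a : ℝ) : sg a ≠ 0 := by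
  rcases sg_cases a with h | h <;> rw [h] <;> norm_num

theorem sg_pos {a : ℝ} (h : 0 < a) : sg a = 1 := by simp [sg, h]

theorem sg_neg {a : ℝ} (h : a < 0) : sg a = -1 := by simp [sg, not_lt.mpr h.le]

theorem sg_mul_abs {a : ℝ} (h : a ≠ 0) : sg a * |a| = a := by
  rcases lt_or_gt_of_ne h with h | h
  · rw [sg_neg h, abs_of_neg h]; ring
  · rw [sg_pos h, abs_of_pos h]; ring

theorem sg_mul_eq_abs {a : ℝ} (h : a ≠ 0) : sg a * a = |a| := by
  rcases lt_or_gt_of_ne h with h | h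
  · rw [sg_neg h, abs_of_neg h]; ring
  · rw [sg_pos h, abs_of_pos h]; ring

theorem sg_sgmul {s t : ℝ} (hs : s = 1 ∨ s = -1) (ht : 0 < t) : sg (s * t) = s := by
  rcases hs with rfl | rfl
  · rw [one_mul, sg_pos ht]
  · rw [sg_neg (by linarith)]

theorem sg_sg (a : ℝ) : sg (sg a) = sg a := by
  have := sg_sgmul (sg_cases a) one_pos
  rwa [mul_one] at this

theorem sg_step {a b : ℝ} (ha : a ≠ 0) (hb : b ≠ 0) : sg b = (-1) ^ (cr a b) * sg a := by
  rcases lt_or_gt_of_ne ha with ha | ha <;> rcases lt_or_gt_of_ne hb with hb | hb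
  · simp [cr, sg_neg ha, sg_neg hb, not_lt.mpr (mul_pos_of_neg_of_neg ha hb).le]
  · simp [cr, sg_neg ha, sg_pos hb, (mul_neg_of_neg_of_pos ha hb)]
  · simp [cr, sg_pos ha, sg_neg hb, (mul_neg_of_pos_of_neg ha hb)]
  · simp [cr, sg_pos ha, sg_pos hb, not_lt.mpr (mul_pos ha hb).le]

theorem cr_le (a b : ℝ) : cr a b ≤ 1 := by unfold cr; split_ifs <;> simp

theorem cr_eq_zero_iff {a b : ℝ} (ha : a ≠ 0) (hb : b ≠ 0) : cr a b = 0 ↔ sg a = sg b := by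
  have h := sg_step ha hb
  have h1 := cr_le a b
  constructor
  · intro h2; rw [h, h2]; simp
  · intro h2
    by_contra h3
    have h4 : cr a b = 1 := by omega
    rw [h4, ← h2] at h
    have := sg_ne a
    apply this; linarith

theorem cr_congr {a b a' b' : ℝ} (ha : a ≠ 0) (hb : b ≠ 0) (ha' : a' ≠ 0) (hb' : b' ≠ 0)
    (h1 : sg a = sg a') (h2 : sg b = sg b') : cr a b = cr a' b' := by
  have e1 := cr_eq_zero_iff ha hb
  have e2 := cr_eq_zero_iff ha' hb'
  have := cr_le a b
  have := cr_le a' b'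
  rw [h1, h2] at e1
  by_cases h : sg a' = sg b'
  · rw [e1.mpr h, e2.mpr h]
  · have := mt e1.mp h
    have := mt e2.mp h
    omega

theorem cnt_congr {u v : ℕ → ℝ} {N : ℕ} (hu : ∀ t, u t ≠ 0) (hv : ∀ t, v t ≠ 0)
    (h : ∀ t, sg (u t) = sg (v t)) : cnt u N = cnt v N :=
  Finset.sum_congr rfl fun t _ => cr_congr (hu _) (hu _) (hv _) (hv _) (h _) (h _)

theorem cnt_succ (u : ℕ → ℝ) (N : ℕ) : cnt u (N + 1) = cnt u N + cr (u N) (u (N + 1)) :=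
  Finset.sum_range_succ _ _

theorem cnt_add (u : ℕ → ℝ) (a b : ℕ) : cnt u (a + b) = cnt u a + cnt (fun t => u (a + t)) b := by
  unfold cnt
  rw [Finset.sum_range_add]
  rfl

theorem cnt_le (u : ℕ → ℝ) (N : ℕ) : cnt u N ≤ N := by
  induction N with
  | zero => simp [cnt]
  | succ N ih => rw [cnt_succ]; have := cr_le (u N) (u (N+1)); omega

theorem cnt_sg {u : ℕ → ℝ} (hu : ∀ t, u t ≠ 0) (N : ℕ) : sg (u N) = (-1) ^ cnt u N * sg (u 0) := by
  induction N with
  | zero => simp [cnt]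
  | succ N ih => rw [cnt_succ, sg_step (hu N) (hu (N+1)), ih, pow_add]; ring

theorem cnt_even {u : ℕ → ℝ} (hu : ∀ t, u t ≠ 0) {N : ℕ} (h : sg (u N) = sg (u 0)) :
    Even (cnt u N) := by
  by_contra hcon
  rw [Nat.not_even_iff_odd] at hcon
  have h1 := cnt_sg hu N
  rw [h, hcon.neg_one_pow] at h1
  apply sg_ne (u 0); linarith

theorem cnt_shift {u : ℕ → ℝ} {N : ℕ} (hper : ∀ t, u (t + N) = u t) (j : ℕ) :
    cnt (fun t => u (j + t)) N = cnt u N := by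
  have h1 := cnt_add u j N
  have h2 := cnt_add u N j
  have h3 : (fun t => u (N + t)) = u := by funext t; rw [add_comm]; exact hper t
  rw [h3, add_comm N j] at h2
  omega

theorem cnt_mul {u : ℕ → ℝ} {N : ℕ} (hper : ∀ t, u (t + N) = u t) (a : ℕ) :
    cnt u (a * N) = a * cnt u N := by
  induction a with
  | zero => simp [cnt]
  | succ a ih =>
    have h3 : (fun t => u (N + t)) = u := by funext t; rw [add_comm]; exact hper t
    rw [Nat.succ_mul, add_comm, cnt_add, h3, ih]; ring

theorem primitive {s : ℕ → ℝ} (hs : ∀ t, s t ≠ 0) {l e k : ℕ} (hl : ∀ t, s (t + l) = s t)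
    (he : ∀ t, s (t + e) = s t) (hc : cnt s l = 2 * k) (hkl : Nat.Coprime k l) : l ∣ e := by
  have h0 : sg (s e) = sg (s 0) := by have := he 0; rw [zero_add] at this; rw [this]
  obtain ⟨c, hcc⟩ := cnt_even hs h0
  have h1 := cnt_mul hl e
  have h2 := cnt_mul he l
  rw [mul_comm e l, h2, hcc, hc] at h1
  have h3 : l * c = e * k := by nlinarith
  exact hkl.symm.dvd_of_dvd_mul_right (Dvd.intro _ h3)

def CP (F : ℝ → ℝ) (k l : ℕ) : Prop :=
  ∃ x, minimalPeriod F x = l ∧ cnt (fun i => F^[i] x) l = 2 * k ∧ ∀ i, F^[i] x ≠ 0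

theorem orbit_follow {F : ℝ → ℝ} {s : ℕ → ℝ} (hs : ∀ t, s t = 1 ∨ s t = -1) (j : ℕ) (t : ℝ)
    (hpos : ∀ r, 0 < lcmp F s j r t) (r : ℕ) :
    F^[r] (s j * t) = s (j + r) * lcmp F s j r t := by
  induction r with
  | zero => rfl
  | succ r ih =>
    rw [iterate_succ_apply', ih]
    have h1 := hpos (r + 1)
    have h2 : lcmp F s j (r + 1) t = s (j + (r + 1)) * F (s (j + r) * lcmp F s j r t) := by
      have h3 : lcmp F s j (r + 1) t = max 0 (s (j + r + 1) * F (s (j + r) * lcmp F s j r t)) := rfl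
      rw [h3] at h1 ⊢
      rw [← add_assoc]
      rcases lt_max_iff.mp h1 with h | h
      · exact absurd h (lt_irrefl _)
      · exact max_eq_right h.le
    rw [h2, ← mul_assoc]
    rcases hs (j + (r + 1)) with h | h <;> rw [h] <;> ring

theorem cycle_of_leg {F : ℝ → ℝ} (hF0 : F 0 = 0) {s : ℕ → ℝ} (hs : ∀ t, s t = 1 ∨ s t = -1)
    {k l m : ℕ} (hl : 0 < l) (hper : ∀ t, s (t + l) = s t) (hc : cnt s l = 2 * k)
    (hkl : Nat.Coprime k l) {j : ℕ} {t : ℝ} (ht : 0 < t) (hm : 0 < m)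
    (hmin : minimalPeriod (lcmp F s j l) t = m) : CP F (m * k) (m * l) := by
  have hs0 : ∀ t, s t ≠ 0 := fun t => by rcases hs t with h | h <;> rw [h] <;> norm_num
  set g := lcmp F s j l with hg
  have hgm : ∀ a, g^[m * a] t = t := fun a => by
    have := (isPeriodicPt_minimalPeriod g t).mul_const a
    rw [hmin] at this
    exact this
  have hpos : ∀ r, 0 < lcmp F s j r t := by
    intro r
    rcases eq_or_lt_of_le (lcmp_nonneg F s j r ht.le) with h | h
    · exfalso
      have h1 := hgm (r + 1)
      rw [hg, ← lcmp_mul hper] at h1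
      have h2 : r ≤ l * (m * (r + 1)) := by
        have : 1 * (1 * r) ≤ l * (m * (r+1)) :=
          Nat.mul_le_mul hl (Nat.mul_le_mul hm (by omega))
        omega
      obtain ⟨c, hc⟩ := Nat.exists_eq_add_of_le h2
      rw [hc, lcmp_add, ← h, lcmp_zero hF0] at h1
      linarith
    · exact h
  have hfol := orbit_follow hs j t hpos
  have hne : ∀ i, F^[i] (s j * t) ≠ 0 := fun i => by
    rw [hfol]; exact mul_ne_zero (hs0 _) (hpos i).ne'
  have hsgn : ∀ i, sg (F^[i] (s j * t)) = s (j + i) := fun i => by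
    rw [hfol]; exact sg_sgmul (hs _) (hpos i)
  have hperk : ∀ a b, s (b + l * a) = s b := by
    intro a
    induction a with
    | zero => simp
    | succ a ih => intro b; rw [Nat.mul_succ, ← add_assoc, hper, ih]
  have hper1 : ∀ i, s (j + (i + l)) = s (j + i) := fun i => by rw [← add_assoc, hper]
  have hcj : cnt (fun i => s (j + i)) l = 2 * k := by rw [cnt_shift hper, hc]
  refine ⟨s j * t, ?_, ?_, hne⟩
  · apply Nat.dvd_antisymm
    · apply IsPeriodicPt.minimalPeriod_dvd
      change F^[m * l] (s j * t) = s j * t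
      rw [hfol, mul_comm m l, hperk, lcmp_mul hper]
      have := hgm 1
      rw [mul_one] at this
      rw [← hg, this]
    · have hp : F^[minimalPeriod F (s j * t)] (s j * t) = s j * t :=
        isPeriodicPt_minimalPeriod F _
      set e := minimalPeriod F (s j * t) with he
      have hse : ∀ i, s (j + (i + e)) = s (j + i) := fun i => by
        rw [← hsgn, ← hsgn, iterate_add_apply, hp]
      obtain ⟨a, ha⟩ := primitive (s := fun i => s (j + i)) (fun i => hs0 _) hper1 hse hcj hkl
      rw [ha, hfol, hperk, lcmp_mul hper] at hp
      have hp' : g^[a] t = t := mul_left_cancel₀ (hs0 j) hp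
      have : m ∣ a := by rw [← hmin]; exact IsPeriodicPt.minimalPeriod_dvd hp'
      rw [ha, mul_comm m l]
      exact Nat.mul_dvd_mul_left l this
  · rw [cnt_congr (v := fun i => s (j + i)) hne (fun i => hs0 _)
      (fun i => by rw [hsgn]; rcases hs (j + i) with h | h <;> rw [h] <;> norm_num [sg]),
      cnt_mul hper1, hcj]
    ring

def Edge (F : ℝ → ℝ) (a b : ℝ) : Prop := (0 < b ∧ b ≤ F a) ∨ (F a ≤ b ∧ b < 0)

theorem Edge.ne {F : ℝ → ℝ} {a b : ℝ} (h : Edge F a b) : b ≠ 0 := by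
  rcases h with h | h
  · exact h.1.ne'
  · exact h.2.ne

theorem edge_leg {F : ℝ → ℝ} {s : ℕ → ℝ} {i : ℕ} {a b : ℝ} (ha : a ≠ 0) (h : Edge F a b)
    (h1 : sg a = s i) (h2 : sg b = s (i + 1)) : |b| ≤ leg F s i |a| := by
  unfold leg
  rw [← h1, ← h2, sg_mul_abs ha]
  apply le_max_of_le_right
  rcases h with ⟨hb, h⟩ | ⟨h, hb⟩
  · rw [sg_pos hb, abs_of_pos hb]; linarith
  · rw [sg_neg hb, abs_of_neg hb]; linarith

theorem edge_leg_zero {F : ℝ → ℝ} {s : ℕ → ℝ} (hs : ∀ t, s t = 1 ∨ s t = -1)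
    {i : ℕ} {a b : ℝ} (ha : a ≠ 0) (h : Edge F a b)
    (h1 : sg a = s i) (h2 : sg b ≠ s (i + 1)) : leg F s i |a| = 0 := by
  unfold leg
  rw [← h1, sg_mul_abs ha]
  apply max_eq_left
  rcases h with ⟨hb, h⟩ | ⟨h, hb⟩
  · rw [sg_pos hb] at h2
    rcases hs (i + 1) with h3 | h3
    · exact absurd h3.symm h2
    · rw [h3]; linarith
  · rw [sg_neg hb] at h2
    rcases hs (i + 1) with h3 | h3
    · rw [h3]; linarith
    · exact absurd h3.symm h2

theorem germ {F : ℝ → ℝ} (hF : Continuous F) (hF0 : F 0 = 0) {S : Type*} (u : ℕ → ℝ)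
    (hu0 : ∀ t, u t ≠ 0) (hE : ∀ t, Edge F (u t) (u (t + 1))) (hfin : (Set.range u).Finite)
    (st : ℕ → S) (th : ℕ → ℕ) (l : ℕ) (hl : 0 < l) (hth : ∀ j, th (j + l) = th j)
    (hst : ∀ j, st (th j + 1) = st (th (j + 1)))
    (hmin : ∀ j τ, st τ = st (th j) → |u (th j)| ≤ |u τ|)
    (hsign : ∀ τ τ', st τ = st τ' → sg (u τ) = sg (u τ'))
    (hleave : ∀ j τ, st τ = st (th j) → st (τ + 1) ≠ st (th (j + 1)) →
      sg (u (τ + 1)) ≠ sg (u (th (j + 1))))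
    (hev : ∀ j, ∃ i, st (th j + i) ≠ st (th (j + i))) (m : ℕ) (hm : 0 < m) :
    ∃ j t, 0 < t ∧ minimalPeriod (lcmp F (fun j => sg (u (th j))) j l) t = m := by
  classical
  let A : ℕ → Set ℕ := fun j => {τ | st τ = st (th j) ∧ st (τ + 1) ≠ st (th (j + 1))}
  let e : ℕ → ℝ := fun j => sInf ((fun τ => |u τ|) '' A j)
  have hfinA : ∀ j, ((fun τ => |u τ|) '' A j).Finite := fun j =>
    (hfin.image (fun x => |x|)).subset (by rintro _ ⟨τ, _, rfl⟩; exact ⟨u τ, ⟨τ, rfl⟩, rfl⟩)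
  have hle : ∀ j, ∀ τ ∈ A j, e j ≤ |u τ| := fun j τ h =>
    csInf_le (hfinA j).bddBelow ⟨τ, h, rfl⟩
  have hat : ∀ j, (A j).Nonempty → ∃ τ ∈ A j, |u τ| = e j := fun j h =>
    (h.image _).csInf_mem (hfinA j)
  have hper : Function.Periodic th l := hth
  have hmem : ∀ j, ∃ d, 0 < d ∧ (∀ i ≤ d, st (th j + i) = st (th (j + i))) ∧
      th j + d ∈ A (j + d) := by
    intro j
    have hd := Nat.find_spec (hev j)
    have hlt := fun i => @Nat.find_min _ _ (hev j) i
    set d0 := Nat.find (hev j)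
    have h0 : d0 ≠ 0 := by intro h; apply hd; rw [h]; rfl
    have h1 : d0 ≠ 1 := by intro h; apply hd; rw [h]; exact hst j
    have hle' : ∀ i ≤ d0 - 1, st (th j + i) = st (th (j + i)) := fun i hi =>
      not_not.mp (hlt i (by omega))
    refine ⟨d0 - 1, by omega, hle', hle' _ le_rfl, ?_⟩
    rw [show th j + (d0 - 1) + 1 = th j + d0 by omega, show j + (d0 - 1) + 1 = j + d0 by omega]
    exact hd
  have hs : ∀ t, (fun j => sg (u (th j))) t = 1 ∨ (fun j => sg (u (th j))) t = -1 :=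
    fun t => sg_cases _
  refine leg_horseshoe hF hF0 hl (fun i => by simp only [hth]) {j | (A j).Nonempty} e ?_ ?_ ?_ ?_ ?_
    m hm
  · obtain ⟨d, _, _, h⟩ := hmem 0
    exact ⟨0 + d, _, h⟩
  · intro j hj
    obtain ⟨τ, _, h⟩ := hat j hj
    rw [← h]; exact abs_pos.mpr (hu0 _)
  · intro j hj
    obtain ⟨τ, h1, h⟩ := hat j hj
    rw [← h]
    exact edge_leg_zero hs (hu0 τ) (hE τ) (hsign _ _ h1.1) (hleave j τ h1.1 h1.2)
  · intro j hj
    obtain ⟨τ, h1, h⟩ := hat j hj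
    obtain ⟨d, hd, hdi, hdA⟩ := hmem j
    refine ⟨d, hd, ⟨_, hdA⟩, ?_⟩
    have hR : ∀ i ≤ d, Rch F (fun j => sg (u (th j))) j i (e j) |u (th j + i)| := by
      intro i
      induction i with
      | zero =>
        intro _
        exact ⟨|u (th j)|, abs_nonneg _, by rw [← h]; exact hmin j τ h1.1, rfl⟩
      | succ i ih =>
        intro hi
        refine (ih (by omega)).trans hF hF0 ?_
        have h3 : Rch F (fun j => sg (u (th j))) (j + i) 1 |u (th j + i)|
          (leg F (fun j => sg (u (th j))) (j + i) |u (th j + i)|) := ⟨_, abs_nonneg _, le_rfl, rfl⟩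
        refine h3.lower hF hF0 (abs_nonneg _) ?_
        refine edge_leg (hu0 _) (hE _) (hsign _ _ (hdi i (by omega))) (hsign _ _ (hdi (i+1) hi))
    refine (hR d le_rfl).lower hF hF0 ?_ (hle _ _ hdA)
    obtain ⟨τ', _, h'⟩ := hat (j + d) ⟨_, hdA⟩
    rw [← h']; exact abs_nonneg _
  · intro j _ j' _ hjj
    have h1 : th j = th j' := by rw [← hper.map_mod_nat j, hjj, hper.map_mod_nat]
    have h2 : th (j + 1) = th (j' + 1) := by
      rw [← hper.map_mod_nat (j + 1), ← hper.map_mod_nat (j' + 1), Nat.add_mod, hjj, ← Nat.add_mod]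
    simp only [e, A, h1, h2]

theorem periodic_range_finite {u : ℕ → ℝ} {N : ℕ} (hN : 0 < N) (hper : ∀ t, u (t + N) = u t) :
    (Set.range u).Finite := by
  refine ((Finset.range N).finite_toSet.image u).subset ?_
  rintro _ ⟨t, rfl⟩
  refine ⟨t % N, by simpa using Nat.mod_lt _ hN, ?_⟩
  exact (show Function.Periodic u N from hper).map_mod_nat t

theorem exists_window {v : ℕ → ℝ} {Dv : ℕ → ℤ} {l k : ℕ} (hl : 0 < l)
    (hD : ∀ i, Dv (i + 1) = Dv i + l * cr (v i) (v (i + 1)) - 2 * k)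
    {B : ℤ} (hB : ∀ i, |Dv i| ≤ B) : ∃ i, cnt (fun t => v (i + t)) l = 2 * k := by
  set C : ℕ → ℕ := fun i => cnt (fun t => v (i + t)) l with hC
  have hstep : ∀ i, C (i + 1) + cr (v i) (v (i + 1)) = C i + cr (v (i + l)) (v (i + l + 1)) := by
    intro i
    have h1 := cnt_add v i (l + 1)
    have h2 := cnt_add v (i + 1) l
    have h3 : cnt (fun t => v (i + t)) (l + 1) = C i + cr (v (i + l)) (v (i + l + 1)) := cnt_succ _ _
    have h4 := cnt_succ v i
    have h5 : i + 1 + l = i + (l + 1) := by omega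
    rw [h5] at h2
    change _ = _ + C (i + 1) at h2
    omega
  have hcr := fun i => cr_le (v i) (v (i + 1))
  have hwin : ∀ i, Dv (i + l) = Dv i + l * ((C i : ℤ) - 2 * k) := by
    intro i
    have : ∀ r, Dv (i + r) = Dv i + l * (cnt (fun t => v (i + t)) r : ℤ) - 2 * k * r := by
      intro r
      induction r with
      | zero => simp [cnt]
      | succ r ih =>
        rw [← add_assoc, hD, ih, cnt_succ]
        push_cast
        rw [← add_assoc]; ring
    rw [this l]; ring
  have hwinN : ∀ a, Dv (a * l) = Dv 0 + l * ∑ b ∈ Finset.range a, ((C (b * l) : ℤ) - 2 * k) := by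
    intro a
    induction a with
    | zero => simp
    | succ a ih => rw [Nat.succ_mul, hwin, ih, Finset.sum_range_succ]; ring
  have hB0 : 0 ≤ B := (abs_nonneg _).trans (hB 0)
  by_contra hcon
  push Not at hcon
  rcases lt_or_gt_of_ne (hcon 0) with h0 | h0
  · have hall : ∀ i, C i < 2 * k := by
      intro i
      induction i with
      | zero => exact h0
      | succ i ih =>
        have := hstep i; have := hcr (i + l); have : C (i + 1) ≠ 2 * k := hcon (i + 1)
        omega
    have hsum : ∀ a : ℕ, ∑ b ∈ Finset.range a, ((C (b * l) : ℤ) - 2 * k) ≤ -a := by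
      intro a
      induction a with
      | zero => simp
      | succ a ih =>
        rw [Finset.sum_range_succ]; have := hall (a * l); push_cast; omega
    have h1 := hsum (2 * B.toNat + 1)
    have h2 := hwinN (2 * B.toNat + 1)
    have h3 := abs_le.mp (hB ((2 * B.toNat + 1) * l))
    have h4 := abs_le.mp (hB 0)
    push_cast at h1
    rw [Int.toNat_of_nonneg hB0] at h1
    have hl' : (1 : ℤ) ≤ l := by exact_mod_cast hl
    nlinarith
  · have hall : ∀ i, 2 * k < C i := by
      intro i
      induction i with
      | zero => exact h0
      | succ i ih =>
        have := hstep i; have := hcr i; have : C (i + 1) ≠ 2 * k := hcon (i + 1)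
        omega
    have hsum : ∀ a : ℕ, (a : ℤ) ≤ ∑ b ∈ Finset.range a, ((C (b * l) : ℤ) - 2 * k) := by
      intro a
      induction a with
      | zero => simp
      | succ a ih =>
        rw [Finset.sum_range_succ]; have := hall (a * l); push_cast; omega
    have h1 := hsum (2 * B.toNat + 1)
    have h2 := hwinN (2 * B.toNat + 1)
    have h3 := abs_le.mp (hB ((2 * B.toNat + 1) * l))
    have h4 := abs_le.mp (hB 0)
    push_cast at h1
    rw [Int.toNat_of_nonneg hB0] at h1
    have hl' : (1 : ℤ) ≤ l := by exact_mod_cast hl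
    nlinarith

theorem theoremH {F : ℝ → ℝ} (hF : Continuous F) (hF0 : F 0 = 0) {u : ℕ → ℝ}
    (hu0 : ∀ t, u t ≠ 0) (hE : ∀ t, Edge F (u t) (u (t + 1))) {n k l : ℕ} (hn : 0 < n) (hl : 0 < l)
    (hper : ∀ t, u (t + n * l) = u t) (hcnt : cnt u (n * l) = 2 * k * n) (hkl : Nat.Coprime k l)
    (hnp : ¬ ∀ t, sg (u (t + l)) = sg (u t)) (m : ℕ) (hm : 0 < m) : CP F (m * k) (m * l) := by
  classical
  have hN : 0 < n * l := Nat.mul_pos hn hl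
  have hfin := periodic_range_finite hN hper
  let D : ℕ → ℤ := fun τ => l * (cnt u τ : ℤ) - 2 * k * τ
  have hDs : ∀ τ, D (τ + 1) = D τ + l * cr (u τ) (u (τ + 1)) - 2 * k := by
    intro τ; simp only [D]; rw [cnt_succ]; push_cast; ring
  have hDper : Function.Periodic D (n * l) := by
    intro τ
    simp only [D]
    rw [cnt_add, cnt_shift hper, hcnt]; push_cast; ring
  obtain ⟨B, hB⟩ : ∃ B, ∀ τ, |D τ| ≤ B := by
    refine ⟨∑ i ∈ Finset.range (n * l), |D i|, fun τ => ?_⟩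
    rw [← hDper.map_mod_nat τ]
    exact Finset.single_le_sum (f := fun i => |D i|) (fun i _ => abs_nonneg _)
      (Finset.mem_range.mpr (Nat.mod_lt _ hN))
  let st : ℕ → ℤ × ℝ := fun τ => (D τ, sg (u τ))
  have hsign : ∀ τ τ', st τ = st τ' → sg (u τ) = sg (u τ') := fun τ τ' h => congrArg Prod.snd h
  have hstD : ∀ τ τ', st τ = st τ' → D τ = D τ' := fun τ τ' h => congrArg Prod.fst h
  have hnext : ∀ τ τ', st τ = st τ' → sg (u (τ + 1)) = sg (u (τ' + 1)) →
      st (τ + 1) = st (τ' + 1) := by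
    intro τ τ' h h'
    have : cr (u τ) (u (τ + 1)) = cr (u τ') (u (τ' + 1)) :=
      cr_congr (hu0 _) (hu0 _) (hu0 _) (hu0 _) (hsign _ _ h) h'
    refine Prod.ext ?_ h'
    show D (τ + 1) = D (τ' + 1)
    rw [hDs, hDs, this, hstD _ _ h]
  have hnu : ∀ σ, ∃ τ', (∃ τ, st τ = σ) → st τ' = σ ∧ ∀ τ'', st τ'' = σ → |u τ'| ≤ |u τ''| := by
    intro σ
    by_cases h : ∃ τ, st τ = σ
    · let T := (fun τ => |u τ|) '' {τ | st τ = σ}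
      have hT : T.Finite := (hfin.image (fun x => |x|)).subset
        (by rintro _ ⟨τ, _, rfl⟩; exact ⟨u τ, ⟨τ, rfl⟩, rfl⟩)
      have hTn : T.Nonempty := by obtain ⟨τ, hτ⟩ := h; exact ⟨_, τ, hτ, rfl⟩
      obtain ⟨τ', h1, h2⟩ := hTn.csInf_mem hT
      refine ⟨τ', fun _ => ⟨h1, fun τ'' h'' => ?_⟩⟩
      have h2' : |u τ'| = sInf T := h2
      rw [h2']
      exact csInf_le hT.bddBelow ⟨τ'', h'', rfl⟩
    · exact ⟨0, fun h' => absurd h' h⟩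
  choose ν hν using hnu
  have hν1 : ∀ τ, st (ν (st τ)) = st τ := fun τ => (hν (st τ) ⟨τ, rfl⟩).1
  have hν2 : ∀ τ τ'', st τ'' = st τ → |u (ν (st τ))| ≤ |u τ''| := fun τ => (hν (st τ) ⟨τ, rfl⟩).2
  let θ : ℕ → ℕ := fun i => (fun a => ν (st (a + 1)))^[i] (ν (st 0))
  have hθs : ∀ i, θ (i + 1) = ν (st (θ i + 1)) := fun i => by
    simp only [θ, iterate_succ_apply']
  have hθst : ∀ i, st (θ (i + 1)) = st (θ i + 1) := fun i => by rw [hθs, hν1]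
  have hθν : ∀ i, θ i = ν (st (θ i)) := by
    intro i
    cases i with
    | zero => show ν (st 0) = ν (st (ν (st 0))); rw [hν1]
    | succ i => rw [hθst, ← hθs]
  have hcr : ∀ i, cr (u (θ i)) (u (θ i + 1)) = cr (u (θ i)) (u (θ (i + 1))) := fun i =>
    cr_congr (hu0 _) (hu0 _) (hu0 _) (hu0 _) rfl (hsign _ _ (hθst i).symm)
  obtain ⟨i0, hi0⟩ := exists_window (v := fun i => u (θ i)) (Dv := fun i => D (θ i)) (k := k) hl
    (fun i => by rw [hstD _ _ (hθst i), hDs, hcr]) (fun i => hB _)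
  have hst0 : st (θ (i0 + l)) = st (θ i0) := by
    refine Prod.ext ?_ ?_
    · show D (θ (i0 + l)) = D (θ i0)
      have : ∀ r, D (θ (i0 + r)) = D (θ i0) + l * (cnt (fun t => u (θ (i0 + t))) r : ℤ) - 2 * k * r := by
        intro r
        induction r with
        | zero => simp [cnt]
        | succ r ih =>
          rw [← add_assoc, hstD _ _ (hθst _), hDs, hcr, ih, cnt_succ]
          push_cast
          rw [← add_assoc]; ring
      rw [this l, hi0]; push_cast; ring
    · show sg (u (θ (i0 + l))) = sg (u (θ i0))
      have := cnt_sg (u := fun t => u (θ (i0 + t))) (fun t => hu0 _) l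
      simp only [hi0] at this
      rw [this]; simp
  have hθper : ∀ j, θ (i0 + (j + l)) = θ (i0 + j) := by
    intro j
    induction j with
    | zero => rw [zero_add, add_zero, hθν (i0 + l), hst0, ← hθν]
    | succ j ih =>
      rw [show i0 + (j + 1 + l) = (i0 + (j + l)) + 1 by omega, hθs, ih, ← add_assoc i0 j 1, hθs]
  have hmain := germ hF hF0 u hu0 hE hfin st (fun j => θ (i0 + j)) l hl hθper
    (fun j => (hθst _).symm)
    (fun j τ h => by rw [hθν (i0 + j)]; exact hν2 _ _ h) hsign
    (fun j τ h1 h2 h3 => by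
      apply h2
      rw [← add_assoc, hθst]
      apply hnext _ _ h1
      rw [h3, ← add_assoc, hsign _ _ (hθst _)])
    (by
      intro j
      by_contra hcon
      push Not at hcon
      apply hnp
      intro t
      have hbig : ∀ c t, u (t + c * (n * l)) = u t := by
        intro c
        induction c with
        | zero => simp
        | succ c ih => intro t; rw [Nat.succ_mul, ← add_assoc, hper, ih]
      have hle : θ (i0 + j) ≤ t + θ (i0 + j) * (n * l) :=
        (Nat.le_mul_of_pos_right _ hN).trans (Nat.le_add_left _ _)
      obtain ⟨i, hi⟩ := Nat.exists_eq_add_of_le hle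
      have e1 := hsign _ _ (hcon i)
      have e2 := hsign _ _ (hcon (i + l))
      rw [← hbig (θ (i0 + j)) t, ← hbig (θ (i0 + j)) (t + l), add_right_comm, hi, add_assoc, e1, e2]
      rw [← add_assoc j i l, hθper])
    m hm
  obtain ⟨j, t, ht, hmp⟩ := hmain
  refine cycle_of_leg hF0 (fun t => sg_cases _) hl (fun t => ?_) ?_ hkl ht hm hmp
  · simp only [hθper]
  · rw [← hi0]
    exact cnt_congr (fun t => sg_ne _) (fun t => hu0 _) (fun t => sg_sg _)

structure Centered (F : ℝ → ℝ) : Prop where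
  cont : Continuous F
  zero : F 0 = 0
  neg : ∀ t, t < 0 → t ≤ F t
  pos : ∀ t, 0 < t → F t ≤ t

theorem Centered.near {F : ℝ → ℝ} (hF : Centered F) {a b : ℝ} (ha : a ≠ 0) (h : Edge F a b)
    (hs : sg a = sg b) : |b| ≤ |a| := by
  rcases lt_or_gt_of_ne ha with ha | ha
  · rcases h with ⟨hb, h⟩ | ⟨h, hb⟩
    · rw [sg_neg ha, sg_pos hb] at hs; norm_num at hs
    · rw [abs_of_neg ha, abs_of_neg hb]; have := hF.neg a ha; linarith
  · rcases h with ⟨hb, h⟩ | ⟨h, hb⟩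
    · rw [abs_of_pos ha, abs_of_pos hb]; have := hF.pos a ha; linarith
    · rw [sg_pos ha, sg_neg hb] at hs; norm_num at hs

theorem edge_near {F : ℝ → ℝ} {a b b' : ℝ} (h : Edge F a b) (hb' : b' ≠ 0) (hs : sg b' = sg b)
    (hle : |b'| ≤ |b|) : Edge F a b' := by
  rcases h with ⟨hb, h⟩ | ⟨h, hb⟩
  · left
    rcases lt_or_gt_of_ne hb' with h' | h'
    · rw [sg_pos hb, sg_neg h'] at hs; norm_num at hs
    · rw [abs_of_pos hb, abs_of_pos h'] at hle; exact ⟨h', by linarith⟩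
  · right
    rcases lt_or_gt_of_ne hb' with h' | h'
    · rw [abs_of_neg hb, abs_of_neg h'] at hle; exact ⟨by linarith, h'⟩
    · rw [sg_neg hb, sg_pos h'] at hs; norm_num at hs

theorem loop_mod {w : ℕ → ℝ} {N : ℕ} (hN : 0 < N) (hw : w N = w 0) (t : ℕ) :
    w ((t + 1) % N) = w (t % N + 1) := by
  have h1 := Nat.mod_lt t hN
  rw [Nat.add_mod]
  rcases Nat.lt_or_ge 1 N with h | h
  · rw [Nat.mod_eq_of_lt h]
    rcases Nat.lt_or_ge (t % N + 1) N with h2 | h2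
    · rw [Nat.mod_eq_of_lt h2]
    · have : t % N + 1 = N := by omega
      rw [this, Nat.mod_self, hw]
  · have : N = 1 := by omega
    subst this
    simp [Nat.mod_one, hw]

theorem loop_cnt {w : ℕ → ℝ} {N : ℕ} (hN : 0 < N) (hw : w N = w 0) :
    cnt (fun t => w (t % N)) N = cnt w N := by
  refine Finset.sum_congr rfl fun t ht => ?_
  simp only []
  rw [loop_mod hN hw, Nat.mod_eq_of_lt (Finset.mem_range.mp ht)]

theorem exists_cross {F : ℝ → ℝ} (hF : Centered F) {u : ℕ → ℝ} (hu0 : ∀ t, u t ≠ 0)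
    (hE : ∀ t, Edge F (u t) (u (t + 1))) {q : ℕ} (hq : 0 < q) (hper : ∀ t, u (t + q) = u t)
    (σ : ℝ) (h1 : ∃ t, sg (u t) = σ) (h2 : ∃ t, sg (u t) ≠ σ) :
    ∃ τ, sg (u τ) = σ ∧ (∀ τ', sg (u τ') = σ → |u τ| ≤ |u τ'|) ∧ sg (u (τ + 1)) ≠ σ := by
  classical
  have hfin := periodic_range_finite hq hper
  let T := (fun τ => |u τ|) '' {τ | sg (u τ) = σ}
  have hT : T.Finite := (hfin.image (fun x => |x|)).subset
    (by rintro _ ⟨τ, _, rfl⟩; exact ⟨u τ, ⟨τ, rfl⟩, rfl⟩)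
  have hTn : T.Nonempty := by obtain ⟨τ, hτ⟩ := h1; exact ⟨_, τ, hτ, rfl⟩
  obtain ⟨τ, hτ, hτ2⟩ := hTn.csInf_mem hT
  have hτ2' : |u τ| = sInf T := hτ2
  have hmin : ∀ τ', sg (u τ') = σ → |u τ| ≤ |u τ'| := by
    intro τ' h; rw [hτ2']; exact csInf_le hT.bddBelow ⟨τ', h, rfl⟩
  have hex : ∃ i, sg (u (τ + i)) ≠ σ := by
    obtain ⟨t, ht⟩ := h2
    have hbig : ∀ c t, u (t + c * q) = u t := by
      intro c
      induction c with
      | zero => simp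
      | succ c ih => intro t; rw [Nat.succ_mul, ← add_assoc, hper, ih]
    have hle : τ ≤ t + τ * q := (Nat.le_mul_of_pos_right _ hq).trans (Nat.le_add_left _ _)
    obtain ⟨i, hi⟩ := Nat.exists_eq_add_of_le hle
    exact ⟨i, by rw [← hi, hbig]; exact ht⟩
  have hd := Nat.find_spec hex
  have hlt := fun i => @Nat.find_min _ _ hex i
  set d := Nat.find hex
  have hd0 : d ≠ 0 := by intro h; apply hd; rw [h]; exact hτ
  have hlt' : ∀ i < d, sg (u (τ + i)) = σ := fun i hi => not_not.mp (hlt i hi)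
  have hdec : ∀ i < d, |u (τ + i)| ≤ |u τ| := by
    intro i
    induction i with
    | zero => intro _; exact le_rfl
    | succ i ih =>
      intro hi
      refine (hF.near (hu0 _) (hE (τ + i)) ?_).trans (ih (by omega))
      rw [hlt' i (by omega), add_assoc, hlt' _ hi]
  refine ⟨τ + (d - 1), hlt' _ (by omega), fun τ' h => (hdec _ (by omega)).trans (hmin τ' h), ?_⟩
  rw [show τ + (d - 1) + 1 = τ + d by omega]
  exact hd

theorem sg_other {a b c : ℝ} (h1 : sg a ≠ sg c) (h2 : sg b ≠ sg c) : sg a = sg b := by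
  rcases sg_cases a with h | h <;> rcases sg_cases b with h' | h' <;>
    rcases sg_cases c with h'' | h'' <;> rw [h, h''] at h1 <;> rw [h', h''] at h2 <;>
    rw [h, h'] <;> simp at h1 h2

set_option maxHeartbeats 1000000 in
theorem lemmaA {F : ℝ → ℝ} (hF : Centered F) {u : ℕ → ℝ} (hu0 : ∀ t, u t ≠ 0)
    (hE : ∀ t, Edge F (u t) (u (t + 1))) {p q : ℕ} (hq : 0 < q) (hper : ∀ t, u (t + q) = u t)
    (hcnt : cnt u q = 2 * p) (hup : ∃ t, 0 < u t) (hun : ∃ t, u t < 0)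
    {k l : ℕ} (hkl : Nat.Coprime k l) (hk2 : 2 * k ≤ l) (hlt : p * l < k * q)
    (m : ℕ) (hm : 0 < m) : CP F (m * k) (m * l) := by
  have hP : ∃ t, sg (u t) = 1 := by obtain ⟨t, h⟩ := hup; exact ⟨t, sg_pos h⟩
  have hM : ∃ t, sg (u t) = -1 := by obtain ⟨t, h⟩ := hun; exact ⟨t, sg_neg h⟩
  obtain ⟨τ1, a1, b1, c1⟩ := exists_cross hF hu0 hE hq hper 1 hP
    (by obtain ⟨t, h⟩ := hM; exact ⟨t, by rw [h]; norm_num⟩)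
  obtain ⟨τ2, a2, b2, c2⟩ := exists_cross hF hu0 hE hq hper (-1) hM
    (by obtain ⟨t, h⟩ := hP; exact ⟨t, by rw [h]; norm_num⟩)
  have d1 : sg (u (τ1 + 1)) = -1 := (sg_cases _).resolve_left c1
  have d2 : sg (u (τ2 + 1)) = 1 := (sg_cases _).resolve_right c2
  have E12 : Edge F (u τ1) (u τ2) := edge_near (hE τ1) (hu0 _) (by rw [a2, d1]) (b2 _ d1)
  have E21 : Edge F (u τ2) (u τ1) := edge_near (hE τ2) (hu0 _) (by rw [a1, d2]) (b1 _ d2)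
  have x12 : cr (u τ1) (u τ2) = 1 := by
    have h1 := cr_le (u τ1) (u τ2)
    have h2 : cr (u τ1) (u τ2) ≠ 0 := by
      rw [Ne, cr_eq_zero_iff (hu0 _) (hu0 _), a1, a2]; norm_num
    omega
  have x21 : cr (u τ2) (u τ1) = 1 := by
    have h1 := cr_le (u τ2) (u τ1)
    have h2 : cr (u τ2) (u τ1) ≠ 0 := by
      rw [Ne, cr_eq_zero_iff (hu0 _) (hu0 _), a1, a2]; norm_num
    omega
  have hk0 : 0 < k := by
    rcases Nat.eq_zero_or_pos k with h | h
    · subst h; simp at hlt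
    · exact h
  have hl0 : 0 < l := by omega
  let z : ℕ → ℝ := fun t => if t % 2 = 0 then u τ1 else u τ2
  have hz0 : ∀ t, z t ≠ 0 := fun t => by simp only [z]; split_ifs <;> exact hu0 _
  have hzE : ∀ t, Edge F (z t) (z (t + 1)) := fun t => by
    simp only [z]
    rcases Nat.mod_two_eq_zero_or_one t with h | h
    · rw [if_pos h, if_neg (by omega)]; exact E12
    · rw [if_neg (by omega), if_pos (by omega)]; exact E21
  have hzx : ∀ t, cr (z t) (z (t + 1)) = 1 := fun t => by
    simp only [z]
    rcases Nat.mod_two_eq_zero_or_one t with h | h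
    · rw [if_pos h, if_neg (by omega)]; exact x12
    · rw [if_neg (by omega), if_pos (by omega)]; exact x21
  have hzc : ∀ N, cnt z N = N := fun N => by
    unfold cnt; rw [Finset.sum_congr rfl (fun t _ => hzx t)]; simp
  have hpq := cnt_le u q
  rw [hcnt] at hpq
  rcases eq_or_lt_of_le hk2 with h2k | h2k
  · -- l = 2 k
    have hk1 : k = 1 := by
      have : k ∣ 1 := by
        rw [← hkl]
        exact Nat.dvd_gcd dvd_rfl (h2k ▸ Dvd.intro_left 2 rfl)
      exact Nat.dvd_one.mp this
    subst hk1
    subst h2k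
    let th : ℕ → ℕ := fun j => if j % 2 = 0 then τ1 else τ2
    have hthz : ∀ j, u (th j) = z j := fun j => by simp only [th, z]; split_ifs <;> rfl
    have hmain := germ hF.cont hF.zero u hu0 hE (periodic_range_finite hq hper)
      (fun t => sg (u t)) th (2 * 1) (by omega)
      (fun j => by simp only [th]; rw [show (j + 2 * 1) % 2 = j % 2 by omega])
      (fun j => by
        simp only [th]
        rcases Nat.mod_two_eq_zero_or_one j with h | h
        · rw [if_pos h, if_neg (by omega), d1, a2]
        · rw [if_neg (by omega), if_pos (by omega), d2, a1])
      (fun j τ h => by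
        simp only [th] at h ⊢
        rcases Nat.mod_two_eq_zero_or_one j with h' | h'
        · rw [if_pos h'] at h ⊢; exact b1 _ (h.trans a1)
        · rw [if_neg (by omega)] at h ⊢; exact b2 _ (h.trans a2))
      (fun τ τ' h => h) (fun j τ _ h => h)
      (by
        intro j
        by_contra hcon
        push Not at hcon
        have h1 : cnt (fun t => u (th j + t)) q = cnt (fun t => z (j + t)) q :=
          cnt_congr (fun t => hu0 _) (fun t => hz0 _) (fun t => by rw [hcon t, hthz])
        rw [cnt_shift hper, hcnt] at h1
        have h2 := cnt_add z j q
        rw [hzc, hzc] at h2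
        omega)
      m hm
    obtain ⟨j, t, ht, hmp⟩ := hmain
    refine cycle_of_leg hF.zero (fun t => sg_cases _) (by omega) (fun t => ?_) ?_ hkl ht hm hmp
    · simp only [hthz, z]
      rw [show (t + 2 * 1) % 2 = t % 2 by omega]
    · exact (cnt_congr (v := z) (fun t => sg_ne _) hz0
        (fun t => by simp only [hthz, sg_sg])).trans (hzc (2 * 1))
  · -- 2 k < l
    obtain ⟨d, hd⟩ := Nat.exists_eq_add_of_le hpq
    obtain ⟨e', he'⟩ := Nat.exists_eq_add_of_lt h2k
    obtain ⟨a, ha⟩ := Nat.exists_eq_add_of_lt hlt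
    set A := ((e' + 1) * l) * q with hA
    set j0 := (a + 1) * l with hj0
    set n := l * d with hn
    have hkd : k * d = p * (e' + 1) + (a + 1) := by
      have h1 : p * (2 * k + e' + 1) + a + 1 = k * (2 * p + d) := by rw [← hd, ← he']; exact ha.symm
      nlinarith
    have hd0 : 0 < d := by
      rcases Nat.eq_zero_or_pos d with h | h
      · subst h; rw [mul_zero] at hkd; omega
      · exact h
    have hn0 : 0 < n := Nat.mul_pos hl0 hd0
    have hNn : A + 2 * j0 = n * l := by
      have : (e' + 1) * q + 2 * (a + 1) = d * l := by
        have e1 : (e' + 1) * q = (e' + 1) * (2 * p + d) := by rw [← hd]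
        have e2 : d * l = d * (2 * k + e' + 1) := by rw [← he']
        rw [e1, e2]; nlinarith
      calc A + 2 * j0 = l * ((e' + 1) * q + 2 * (a + 1)) := by rw [hA, hj0]; ring
        _ = n * l := by rw [this, hn]; ring
    have hNc : ((e' + 1) * l) * (2 * p) + 2 * j0 = 2 * k * n := by
      rw [hj0, hn]
      calc (e' + 1) * l * (2 * p) + 2 * ((a + 1) * l) = 2 * l * (p * (e' + 1) + (a + 1)) := by ring
        _ = 2 * k * (l * d) := by rw [← hkd]; ring
    have hN0 : 0 < n * l := Nat.mul_pos hn0 hl0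
    let w : ℕ → ℝ := fun t => if t < A then u (τ1 + t) else z (t - A)
    have hbig : ∀ c t, u (t + c * q) = u t := by
      intro c
      induction c with
      | zero => simp
      | succ c ih => intro t; rw [Nat.succ_mul, ← add_assoc, hper, ih]
    have hz00 : z 0 = u τ1 := by simp [z]
    have hw1 : ∀ t, t ≤ A → w t = u (τ1 + t) := by
      intro t ht
      simp only [w]
      rcases Nat.lt_or_ge t A with h | h
      · rw [if_pos h]
      · have : t = A := le_antisymm ht h
        rw [if_neg (by omega), this, Nat.sub_self, hz00, hA, hbig]
    have hw2 : ∀ t, w (A + t) = z t := by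
      intro t; simp only [w]; rw [if_neg (by omega), Nat.add_sub_cancel_left]
    have hw0 : ∀ t, w t ≠ 0 := fun t => by
      simp only [w]; split_ifs
      · exact hu0 _
      · exact hz0 _
    have hwE : ∀ t, Edge F (w t) (w (t + 1)) := by
      intro t
      rcases Nat.lt_or_ge t A with h | h
      · rw [hw1 t h.le, hw1 (t + 1) h]; exact hE _
      · obtain ⟨b, rfl⟩ := Nat.exists_eq_add_of_le h
        rw [hw2, add_assoc, hw2]; exact hzE b
    have hwN : w (n * l) = w 0 := by
      rw [← hNn, hw2, hw1 0 (Nat.zero_le _), add_zero]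
      simp only [z]; rw [if_pos (by omega)]
    have hwc : cnt w (n * l) = 2 * k * n := by
      rw [← hNn, cnt_add]
      have e1 : (fun t => w (A + t)) = z := funext hw2
      have e2 : cnt w A = cnt (fun t => u (τ1 + t)) A :=
        Finset.sum_congr rfl fun t ht => by
          have := Finset.mem_range.mp ht
          rw [hw1 t this.le, hw1 (t + 1) this]
      have e3 : cnt (fun t => u (τ1 + t)) A = ((e' + 1) * l) * (2 * p) := by
        rw [hA, cnt_mul (fun t => by rw [← add_assoc, hper]), cnt_shift hper, hcnt]
      rw [e1, e2, hzc, e3, hNc]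
    let v : ℕ → ℝ := fun t => w (t % (n * l))
    have hvs : ∀ t, v (t + 1) = w (t % (n * l) + 1) := fun t => loop_mod hN0 hwN t
    have hv0 : ∀ t, v t ≠ 0 := fun t => hw0 _
    have hvc : cnt v (n * l) = 2 * k * n := by rw [← hwc]; exact loop_cnt hN0 hwN
    refine theoremH hF.cont hF.zero (u := v) hv0 (fun t => ?_) hn0 hl0 (fun t => ?_) hvc hkl ?_ m hm
    · rw [hvs]; exact hwE _
    · simp only [v, Nat.add_mod_right]
    · intro hcon
      have hj0l : l ≤ 2 * j0 := by
        have : l ≤ (a + 1) * l := Nat.le_mul_of_pos_left l (by omega)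
        omega
      have hs0 : ∀ t, sg (v t) ≠ 0 := fun t => sg_ne _
      have g1 : cnt (fun t => sg (v t)) (n * l) = 2 * k * n := by
        rw [← hvc]; exact cnt_congr hs0 hv0 (fun t => sg_sg _)
      rw [cnt_mul hcon] at g1
      have g2 : cnt (fun t => sg (v (A + t))) l = l := by
        have : ∀ t ∈ Finset.range l, cr (sg (v (A + t))) (sg (v (A + (t + 1)))) = 1 := by
          intro t ht
          have htl := Finset.mem_range.mp ht
          have h1 : v (A + t) = z t := by
            simp only [v]; rw [Nat.mod_eq_of_lt (by omega), hw2]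
          have h2 : v (A + (t + 1)) = z (t + 1) := by
            rw [← add_assoc, hvs, Nat.mod_eq_of_lt (by omega), add_assoc, hw2]
          rw [h1, h2]
          exact (cr_congr (sg_ne _) (sg_ne _) (hz0 _) (hz0 _) (sg_sg _) (sg_sg _)).trans (hzx t)
        unfold cnt
        rw [Finset.sum_congr rfl this]; simp
      rw [cnt_shift (u := fun t => sg (v t)) hcon A] at g2
      rw [g2] at g1
      have : 2 * k * n < l * n := Nat.mul_lt_mul_of_pos_right h2k hn0
      rw [mul_comm l n] at this
      omega

def HP (f : ℝ → ℝ) (p q : ℕ) : Prop := ∃ x, minimalPeriod f x = q ∧ overCount f x q = 2 * p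

noncomputable def Fz (f : ℝ → ℝ) (z t : ℝ) : ℝ :=
  if t ≤ 0 then max (f (t + z) - z) t else min (f (t + z) - z) t

theorem Fz_centered {f : ℝ → ℝ} (hf : Continuous f) {z : ℝ} (hz : f z = z) : Centered (Fz f z) where
  cont := by
    unfold Fz
    refine Continuous.if_le (by fun_prop) (by fun_prop) continuous_id continuous_const ?_
    intro t ht
    subst ht
    simp [hz]
  zero := by simp [Fz, hz]
  neg t ht := by unfold Fz; rw [if_pos ht.le]; exact le_max_right _ _
  pos t ht := by unfold Fz; rw [if_neg (not_le.mpr ht)]; exact min_le_right _ _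

theorem Fz_neg {f : ℝ → ℝ} {z t : ℝ} (ht : t < 0) (h : t + z < f (t + z)) :
    Fz f z t = f (t + z) - z := by
  unfold Fz; rw [if_pos ht.le]; exact max_eq_left (by linarith)

theorem Fz_pos {f : ℝ → ℝ} {z t : ℝ} (ht : 0 < t) (h : f (t + z) < t + z) :
    Fz f z t = f (t + z) - z := by
  unfold Fz; rw [if_neg (not_le.mpr ht)]; exact min_eq_left (by linarith)

theorem minPer_conj {f F : ℝ → ℝ} {x y z : ℝ} (h : ∀ i, f^[i] x = F^[i] y + z) :
    minimalPeriod f x = minimalPeriod F y := by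
  rw [minimalPeriod_eq_minimalPeriod_iff]
  intro n
  have h0 : x = y + z := h 0
  constructor
  · intro h1
    have h2 : f^[n] x = x := h1
    show F^[n] y = y
    rw [h n] at h2; linarith
  · intro h1
    have h2 : F^[n] y = y := h1
    show f^[n] x = x
    rw [h n, h2, h0]

theorem overCount_conj {f F : ℝ → ℝ} {x y : ℝ} (q : ℕ)
    (h : ∀ i, (0 < F^[i] y ∧ f (f^[i] x) < f^[i] x) ∨ (F^[i] y < 0 ∧ f^[i] x < f (f^[i] x))) :
    overCount f x q = cnt (fun i => F^[i] y) q := by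
  unfold overCount cnt
  rw [Finset.card_filter]
  refine Finset.sum_congr rfl fun i _ => ?_
  unfold cr
  have : (f (f^[i] x) - f^[i] x) * (f (f^[i + 1] x) - f^[i + 1] x) < 0 ↔
      F^[i] y * F^[i + 1] y < 0 := by
    rcases h i with ⟨a, b⟩ | ⟨a, b⟩ <;> rcases h (i + 1) with ⟨c, d⟩ | ⟨c, d⟩
    · exact iff_of_false (by nlinarith) (by nlinarith)
    · exact iff_of_true (by nlinarith) (by nlinarith)
    · exact iff_of_true (by nlinarith) (by nlinarith)
    · exact iff_of_false (by nlinarith) (by nlinarith)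
  simp only [this]

theorem not_fixed {F : ℝ → ℝ} {y : ℝ} {q : ℕ} (hq : 2 ≤ q) (h : minimalPeriod F y = q) (i : ℕ) :
    F (F^[i] y) ≠ F^[i] y := by
  intro hfix
  have h1 : minimalPeriod F (F^[i] y) = 1 := minimalPeriod_eq_one_iff_isFixedPt.mpr hfix
  rw [minimalPeriod_apply_iterate (minimalPeriod_pos_iff_mem_periodicPts.mp (by omega))] at h1
  omega

theorem back_transfer {f : ℝ → ℝ} {z : ℝ} {k l : ℕ} (hl : 2 ≤ l) (h : CP (Fz f z) k l) :
    HP f k l := by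
  obtain ⟨y, h1, h2, h3⟩ := h
  have hnf := not_fixed hl h1
  have hkey : ∀ w, w ≠ 0 → Fz f z w ≠ w → Fz f z w = f (w + z) - z ∧
      ((0 < w ∧ f (w + z) < w + z) ∨ (w < 0 ∧ w + z < f (w + z))) := by
    intro w hw hF
    rcases lt_or_gt_of_ne hw with hw | hw
    · by_cases hc : w + z < f (w + z)
      · exact ⟨Fz_neg hw hc, Or.inr ⟨hw, hc⟩⟩
      · exfalso; apply hF; unfold Fz; rw [if_pos hw.le]; exact max_eq_right (by linarith)
    · by_cases hc : f (w + z) < w + z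
      · exact ⟨Fz_pos hw hc, Or.inl ⟨hw, hc⟩⟩
      · exfalso; apply hF; unfold Fz; rw [if_neg (not_le.mpr hw)]
        exact min_eq_right (by linarith)
  have horb : ∀ i, f^[i] (y + z) = (Fz f z)^[i] y + z := by
    intro i
    induction i with
    | zero => rfl
    | succ i ih =>
      rw [iterate_succ_apply', iterate_succ_apply', ih, (hkey _ (h3 i) (hnf i)).1]; ring
  refine ⟨y + z, ?_, ?_⟩
  · rw [minPer_conj horb, h1]
  · rw [← h2]
    apply overCount_conj
    intro i
    rw [horb]
    exact (hkey _ (h3 i) (hnf i)).2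

theorem last_zero {h : ℝ → ℝ} (hc : Continuous h) {a b : ℝ} (hab : a < b) (ha : 0 < h a)
    (hb : h b < 0) : ∃ z, a < z ∧ z < b ∧ h z = 0 ∧ ∀ t, z < t → t ≤ b → h t < 0 := by
  have hcomp : IsCompact (Set.Icc a b ∩ {t | h t = 0}) :=
    isCompact_Icc.inter_right (isClosed_eq hc continuous_const)
  have hne : (Set.Icc a b ∩ {t | h t = 0}).Nonempty := by
    obtain ⟨t, ht, ht'⟩ := intermediate_value_Icc' hab.le hc.continuousOn ⟨hb.le, ha.le⟩
    exact ⟨t, ht, ht'⟩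
  obtain ⟨z, ⟨⟨hz1, hz2⟩, hz3⟩, hz4⟩ := hcomp.exists_isGreatest hne
  have hz3 : h z = 0 := hz3
  refine ⟨z, ?_, ?_, hz3, ?_⟩
  · rcases eq_or_lt_of_le hz1 with h' | h'
    · rw [← h'] at hz3; linarith
    · exact h'
  · rcases eq_or_lt_of_le hz2 with h' | h'
    · rw [h'] at hz3; linarith
    · exact h'
  · intro t ht htb
    by_contra hcon
    push Not at hcon
    obtain ⟨t', ⟨h1, h2⟩, h3⟩ := intermediate_value_Icc' htb hc.continuousOn ⟨hb.le, hcon⟩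
    have := hz4 ⟨⟨by linarith, h2⟩, h3⟩
    linarith

theorem first_zero {h : ℝ → ℝ} (hc : Continuous h) {a b : ℝ} (hab : a < b) (ha : h a < 0)
    (hb : 0 < h b) : ∃ z, a < z ∧ z < b ∧ h z = 0 ∧ ∀ t, a ≤ t → t < z → h t < 0 := by
  obtain ⟨z, h1, h2, h3, h4⟩ := last_zero (h := fun t => h (-t)) (a := -b) (b := -a)
    (by fun_prop) (by linarith) (by simpa using hb) (by simpa using ha)
  refine ⟨-z, by linarith, by linarith, h3, fun t ht ht' => ?_⟩
  have := h4 (-t) (by linarith) (by linarith)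
  simpa using this

theorem exists_min_idx {Y : ℕ → ℝ} (hfin : (Set.range Y).Finite) (P : ℕ → Prop) (h : ∃ i, P i) :
    ∃ i, P i ∧ ∀ j, P j → Y i ≤ Y j := by
  have hT : (Y '' {i | P i}).Finite := hfin.subset (Set.image_subset_range _ _)
  have hTn : (Y '' {i | P i}).Nonempty := by obtain ⟨τ, hτ⟩ := h; exact ⟨_, τ, hτ, rfl⟩
  obtain ⟨i, h1, h2⟩ := hTn.csInf_mem hT
  exact ⟨i, h1, fun j hj => by rw [h2]; exact csInf_le hT.bddBelow ⟨j, hj, rfl⟩⟩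

theorem edge_self {F : ℝ → ℝ} {a : ℝ} (h : F a ≠ 0) : Edge F a (F a) := by
  rcases lt_or_gt_of_ne h with h | h
  · exact Or.inr ⟨le_rfl, h⟩
  · exact Or.inl ⟨h, le_rfl⟩

/-- excursion lemma, for case II -/
theorem excursion {F : ℝ → ℝ} (hF : Centered F) {a : ℕ → ℝ} {ζ : ℝ} {d : ℕ} (hd : 0 < d)
    (hζ : 0 < ζ) (hFζ : F ζ = ζ) (ha : ∀ i < d, a i ≠ 0) (hstep : ∀ i < d, F (a i) = a (i + 1))
    (ha0 : 0 < a 0) (ha0ζ : a 0 ≤ ζ) (hadζ : ζ ≤ a d) (hneg : ∃ i < d, a i < 0)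
    {k l : ℕ} (hk : 0 < k) (hkl : Nat.Coprime k l) (hk2 : 2 * k ≤ l) (m : ℕ) (hm : 0 < m) :
    CP F (m * k) (m * l) := by
  set M := (d + 1) * l with hM
  let w : ℕ → ℝ := fun t => if t < M + 1 then ζ else if t < M + 1 + d then a (t - (M + 1)) else ζ
  have hw1 : ∀ t, t < M + 1 → w t = ζ := fun t h => by simp only [w]; rw [if_pos h]
  have hw2 : ∀ i, i < d → w (M + 1 + i) = a i := fun i h => by
    simp only [w]
    rw [if_neg (by omega), if_pos (by omega), Nat.add_sub_cancel_left]
  have hw3 : ∀ t, M + 1 + d ≤ t → w t = ζ := fun t h => by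
    simp only [w]; rw [if_neg (by omega), if_neg (by omega)]
  have hN : 0 < M + 1 + d := by omega
  have hwN : w (M + 1 + d) = w 0 := by rw [hw3 _ le_rfl, hw1 _ (by omega)]
  have hw0 : ∀ t, w t ≠ 0 := by
    intro t
    rcases Nat.lt_or_ge t (M + 1) with h | h
    · rw [hw1 t h]; exact hζ.ne'
    · rcases Nat.lt_or_ge t (M + 1 + d) with h' | h'
      · obtain ⟨i, rfl⟩ := Nat.exists_eq_add_of_le h
        rw [hw2 i (by omega)]; exact ha i (by omega)
      · rw [hw3 t h']; exact hζ.ne'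
  have hζζ : Edge F ζ ζ := Or.inl ⟨hζ, by rw [hFζ]⟩
  have hwE : ∀ t, Edge F (w t) (w (t + 1)) := by
    intro t
    rcases Nat.lt_or_ge t (M + 1) with h | h
    · rw [hw1 t h]
      rcases Nat.lt_or_ge (t + 1) (M + 1) with h' | h'
      · rw [hw1 _ h']; exact hζζ
      · have : t + 1 = M + 1 + 0 := by omega
        rw [this, hw2 0 hd]
        exact Or.inl ⟨ha0, by rw [hFζ]; exact ha0ζ⟩
    · rcases Nat.lt_or_ge t (M + 1 + d) with h' | h'
      · obtain ⟨i, rfl⟩ := Nat.exists_eq_add_of_le h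
        have hi : i < d := by omega
        rw [hw2 i hi]
        rcases Nat.lt_or_ge (i + 1) d with h'' | h''
        · rw [add_assoc, hw2 _ h'', ← hstep i hi]
          apply edge_self
          rw [hstep i hi]; exact ha _ h''
        · have hid : i + 1 = d := by omega
          rw [hw3 _ (by omega)]
          refine Or.inl ⟨hζ, ?_⟩
          rw [hstep i hi, hid]; exact hadζ
      · rw [hw3 t h', hw3 _ (by omega)]; exact hζζ
  let v : ℕ → ℝ := fun t => w (t % (M + 1 + d))
  have hvs : ∀ t, v (t + 1) = w (t % (M + 1 + d) + 1) := fun t => loop_mod hN hwN t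
  have hv0 : ∀ t, v t ≠ 0 := fun t => hw0 _
  have hvper : ∀ t, v (t + (M + 1 + d)) = v t := fun t => by simp only [v, Nat.add_mod_right]
  have hvc : cnt v (M + 1 + d) ≤ d + 1 := by
    have e1 : cnt v (M + 1 + d) = cnt w (M + 1 + d) := loop_cnt hN hwN
    rw [e1, show M + 1 + d = M + (d + 1) by omega, cnt_add]
    have e2 : cnt w M = 0 := Finset.sum_eq_zero fun t ht => by
      have := Finset.mem_range.mp ht
      rw [hw1 t (by omega), hw1 (t + 1) (by omega)]
      exact (cr_eq_zero_iff hζ.ne' hζ.ne').mpr rfl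
    rw [e2, zero_add]
    exact cnt_le _ _
  obtain ⟨p, hp⟩ := cnt_even hv0 (N := M + 1 + d) (by
    have := hvper 0; rw [zero_add] at this; rw [this])
  refine lemmaA hF hv0 (fun t => ?_) (p := p) hN hvper (by omega) ?_ ?_ hkl hk2 ?_ m hm
  · rw [hvs]; exact hwE _
  · refine ⟨0, ?_⟩
    simp only [v, Nat.zero_mod]; rw [hw1 0 (by omega)]; exact hζ
  · obtain ⟨i, hi, hi'⟩ := hneg
    refine ⟨M + 1 + i, ?_⟩
    simp only [v]; rw [Nat.mod_eq_of_lt (by omega), hw2 i hi]; exact hi'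
  · have h1 : p * l ≤ (d + 1) * l := Nat.mul_le_mul_right l (by omega)
    have h2 : 1 * (M + 1 + d) ≤ k * (M + 1 + d) := Nat.mul_le_mul_right _ hk
    omega

theorem front_transfer {f : ℝ → ℝ} (hf : Continuous f) {x : ℝ} {q : ℕ} (hq : 2 ≤ q)
    (hx : minimalPeriod f x = q) : ∃ z, f z = z ∧
    ((∃ y, minimalPeriod (Fz f z) y = q ∧ cnt (fun i => (Fz f z)^[i] y) q = overCount f x q ∧
      (∀ i, (Fz f z)^[i] y ≠ 0) ∧ (∃ i, 0 < (Fz f z)^[i] y) ∧ (∃ i, (Fz f z)^[i] y < 0)) ∨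
     (∀ k l : ℕ, 0 < k → Nat.Coprime k l → 2 * k ≤ l → ∀ m, 0 < m → CP (Fz f z) (m * k) (m * l))) := by
  classical
  let Y : ℕ → ℝ := fun i => f^[i] x
  have hYs : ∀ i, f (Y i) = Y (i + 1) := fun i => (iterate_succ_apply' f i x).symm
  have hnf : ∀ i, f (Y i) ≠ Y i := not_fixed hq hx
  have hYper : ∀ i, Y (i + q) = Y i := fun i => by
    simp only [Y]
    rw [iterate_add_apply]
    have : f^[q] x = x := by rw [← hx]; exact isPeriodicPt_minimalPeriod f x
    rw [this]
  have hfin := periodic_range_finite (by omega) hYper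
  have hY0 : Y q = Y 0 := by have := hYper 0; rwa [zero_add] at this
  have hleft : ∃ i, f (Y i) < Y i := by
    by_contra hcon
    push Not at hcon
    have : StrictMono Y := strictMono_nat_of_lt_succ fun i => by
      rw [← hYs]; exact lt_of_le_of_ne (hcon i) (hnf i).symm
    have := this (show 0 < q by omega)
    rw [hY0] at this
    exact lt_irrefl _ this
  obtain ⟨a, ha, hamin⟩ := exists_min_idx hfin _ hleft
  obtain ⟨b, -, hbmin⟩ := exists_min_idx hfin (fun _ => True) ⟨0, trivial⟩
  have hb : Y b < f (Y b) := lt_of_le_of_ne (by rw [hYs]; exact hbmin _ trivial) (hnf b).symm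
  have hba : Y b < Y a := by
    refine lt_of_le_of_ne (hbmin a trivial) ?_
    intro h; rw [h] at hb; linarith
  obtain ⟨z, hbz, hza, hz0, hzl⟩ := last_zero (h := fun t => f t - t) (by fun_prop) hba
    (by linarith) (by linarith)
  have hz : f z = z := by linarith
  have hne : ∀ i, Y i ≠ z := fun i h => hnf i (by rw [h, hz])
  have hlow : ∀ i, Y i < Y a → Y i < z ∧ Y i < f (Y i) := by
    intro i hi
    have h1 : Y i < f (Y i) := by
      refine lt_of_le_of_ne ?_ (hnf i).symm
      by_contra hcon
      have := hamin i (by linarith)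
      linarith
    refine ⟨?_, h1⟩
    by_contra hcon
    have := hzl (Y i) (lt_of_le_of_ne (by linarith) (hne i).symm) hi.le
    linarith
  refine ⟨z, hz, ?_⟩
  by_cases hcase : ∀ i, Y a ≤ Y i → f (Y i) < Y i
  · left
    have hsgn : ∀ i, (0 < Y i - z ∧ f (Y i) < Y i) ∨ (Y i - z < 0 ∧ Y i < f (Y i)) := by
      intro i
      rcases lt_or_ge (Y i) (Y a) with h | h
      · right; have := hlow i h; exact ⟨by linarith, this.2⟩
      · left; exact ⟨by linarith, hcase i h⟩
    have horb : ∀ i, (Fz f z)^[i] (x - z) = Y i - z := by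
      intro i
      induction i with
      | zero => rfl
      | succ i ih =>
        rw [iterate_succ_apply', ih, ← hYs]
        have e : Y i - z + z = Y i := by ring
        rcases hsgn i with ⟨h1, h2⟩ | ⟨h1, h2⟩
        · rw [Fz_pos h1 (by rw [e]; exact h2), e]
        · rw [Fz_neg h1 (by rw [e]; exact h2), e]
    refine ⟨x - z, ?_, ?_, ?_, ⟨a, ?_⟩, ⟨b, ?_⟩⟩
    · rw [← hx]; symm
      exact minPer_conj (z := z) (fun i => by rw [horb]; simp [Y])
    · symm
      apply overCount_conj
      intro i
      rw [horb]
      exact hsgn i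
    · intro i; rw [horb]
      rcases hsgn i with h | h
      · exact h.1.ne'
      · exact h.1.ne
    · rw [horb]; linarith
    · rw [horb]; linarith
  · right
    push Not at hcase
    obtain ⟨c, hac, hc⟩ := hcase
    have hc' : Y c < f (Y c) := lt_of_le_of_ne hc (hnf c).symm
    have hac' : Y a < Y c := lt_of_le_of_ne hac (fun h => by rw [← h] at hc'; linarith)
    obtain ⟨ζ, haζ, hζc, hζ0, hζl⟩ := first_zero (h := fun t => f t - t) (by fun_prop) hac'
      (by linarith) (by linarith)
    have hζ : f ζ = ζ := by linarith
    have hleft' : ∀ t, z < t → t < ζ → f t < t := by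
      intro t h1 h2
      rcases le_total t (Y a) with h | h
      · have := hzl t h1 h; linarith
      · have := hζl t h h2; linarith
    have hneζ : ∀ i, Y i ≠ ζ := fun i h => hnf i (by rw [h, hζ])
    have hex : ∃ i, ζ < Y (a + i) := by
      have hbig : ∀ c t, Y (t + c * q) = Y t := by
        intro c
        induction c with
        | zero => simp
        | succ c ih => intro t; rw [Nat.succ_mul, ← add_assoc, hYper, ih]
      have hle : a ≤ c + a * q := (Nat.le_mul_of_pos_right _ (by omega)).trans (Nat.le_add_left _ _)
      obtain ⟨i, hi⟩ := Nat.exists_eq_add_of_le hle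
      exact ⟨i, by rw [← hi, hbig]; exact hζc⟩
    have hd := Nat.find_spec hex
    have hlt := fun i => @Nat.find_min _ _ hex i
    set d := Nat.find hex
    have hd0 : 0 < d := by
      rcases Nat.eq_zero_or_pos d with h | h
      · rw [h, add_zero] at hd; linarith
      · exact h
    have hlt' : ∀ i < d, Y (a + i) < ζ := fun i hi =>
      lt_of_le_of_ne (not_lt.mp (hlt i hi)) (hneζ _)
    have hsgn : ∀ i < d, (0 < Y (a + i) - z ∧ f (Y (a + i)) < Y (a + i)) ∨
        (Y (a + i) - z < 0 ∧ Y (a + i) < f (Y (a + i))) := by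
      intro i hi
      rcases lt_or_gt_of_ne (hne (a + i)) with h | h
      · right; exact ⟨by linarith, (hlow _ (by linarith)).2⟩
      · left; exact ⟨by linarith, hleft' _ h (hlt' i hi)⟩
    have hFZ : ∀ i < d, Fz f z (Y (a + i) - z) = Y (a + (i + 1)) - z := by
      intro i hi
      rw [← add_assoc, ← hYs]
      have e : Y (a + i) - z + z = Y (a + i) := by ring
      rcases hsgn i hi with ⟨h1, h2⟩ | ⟨h1, h2⟩
      · rw [Fz_pos h1 (by rw [e]; exact h2), e]
      · rw [Fz_neg h1 (by rw [e]; exact h2), e]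
    intro k l hk hkl hk2 m hm
    refine excursion (Fz_centered hf hz) (a := fun i => Y (a + i) - z) (ζ := ζ - z) hd0
      (by linarith) ?_ ?_ hFZ ?_ ?_ ?_ ?_ hk hkl hk2 m hm
    · have e : ζ - z + z = ζ := by ring
      unfold Fz
      rw [if_neg (by linarith), e, hζ, min_self]
    · intro i hi
      rcases hsgn i hi with h | h
      · exact h.1.ne'
      · exact h.1.ne
    · simp only [add_zero]; linarith
    · simp only [add_zero]; linarith
    · linarith
    · refine ⟨d - 1, by omega, ?_⟩
      have h1 := hlt' (d - 1) (by omega)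
      rcases hsgn (d - 1) (by omega) with ⟨h, h'⟩ | h
      · exfalso
        rw [hYs, show a + (d - 1) + 1 = a + d by omega] at h'
        linarith
      · exact h.1

def Shar (n m : ℕ) : Prop :=
  ∀ g : ℝ → ℝ, Continuous g → (∃ x, minimalPeriod g x = n) → ∃ x, minimalPeriod g x = m

theorem lemmaB {F : ℝ → ℝ} (hF : Continuous F) (hF0 : F 0 = 0) {x : ℝ} {n k l m : ℕ} (hn : 0 < n)
    (hl : 0 < l) (hm : 0 < m) (hx : minimalPeriod F x = n * l)
    (hcnt : cnt (fun i => F^[i] x) (n * l) = 2 * (n * k)) (hx0 : ∀ i, F^[i] x ≠ 0)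
    (hkl : Nat.Coprime k l) (hS : Shar n m) : CP F (m * k) (m * l) := by
  have hper : ∀ t, F^[t + n * l] x = F^[t] x := fun t => by
    rw [iterate_add_apply]
    have : F^[n * l] x = x := by rw [← hx]; exact isPeriodicPt_minimalPeriod F x
    rw [this]
  by_cases hsp : ∀ t, sg (F^[t + l] x) = sg (F^[t] x)
  · let s : ℕ → ℝ := fun t => sg (F^[t] x)
    have hs : ∀ t, s t = 1 ∨ s t = -1 := fun t => sg_cases _
    have hs0 : ∀ t, s t ≠ 0 := fun t => sg_ne _
    have hsper : ∀ t, s (t + l) = s t := hsp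
    have hsc : cnt s l = 2 * k := by
      have h1 : cnt s (n * l) = 2 * (n * k) := by
        rw [← hcnt]; exact cnt_congr hs0 hx0 (fun t => sg_sg _)
      rw [cnt_mul hsper] at h1
      have : n * cnt s l = n * (2 * k) := by rw [h1]; ring
      exact Nat.eq_of_mul_eq_mul_left hn this
    have hfol : ∀ r, lcmp F s 0 r |x| = |F^[r] x| := by
      intro r
      induction r with
      | zero => rfl
      | succ r ih =>
        have h3 : lcmp F s 0 (r + 1) |x| =
          max 0 (s (0 + r + 1) * F (s (0 + r) * lcmp F s 0 r |x|)) := rfl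
        rw [h3, ih, zero_add]
        simp only [s]
        rw [sg_mul_abs (hx0 r), ← iterate_succ_apply' F r x, sg_mul_eq_abs (hx0 _)]
        exact max_eq_right (abs_nonneg _)
    have hperk : ∀ a, s (l * a) = s 0 := by
      intro a
      induction a with
      | zero => simp
      | succ a ih => rw [Nat.mul_succ, hsper, ih]
    set g := lcmp F s 0 l with hg
    have hgc : Continuous g := lcmp_cont hF s 0 l
    have hga : ∀ a, g^[a] |x| = |F^[l * a] x| := fun a => by
      rw [hg, ← lcmp_mul hsper, hfol]
    have hgmin : minimalPeriod g |x| = n := by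
      apply Nat.dvd_antisymm
      · apply IsPeriodicPt.minimalPeriod_dvd
        change g^[n] |x| = |x|
        rw [hga, mul_comm]
        have := hper 0
        rw [zero_add] at this
        rw [this]; rfl
      · have h1 : g^[minimalPeriod g |x|] |x| = |x| := isPeriodicPt_minimalPeriod g _
        set e := minimalPeriod g |x|
        rw [hga] at h1
        have h2 : F^[l * e] x = x := by
          rw [← sg_mul_abs (hx0 (l * e)), h1]
          have : sg (F^[l * e] x) = sg x := hperk e
          rw [this]; exact sg_mul_abs (hx0 0)
        have h3 : n * l ∣ l * e := by rw [← hx]; exact IsPeriodicPt.minimalPeriod_dvd h2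
        rw [mul_comm n l] at h3
        exact Nat.dvd_of_mul_dvd_mul_left hl h3
    have hfinal : ∃ t, 0 < t ∧ minimalPeriod g t = m := by
      by_cases hmn : m = n
      · exact ⟨|x|, abs_pos.mpr (hx0 0), by rw [hgmin, hmn]⟩
      · let Y : ℕ → ℝ := fun a => g^[a] |x|
        have hYper : ∀ a, Y (a + n) = Y a := fun a => by
          simp only [Y]
          rw [iterate_add_apply]
          have : g^[n] |x| = |x| := by rw [← hgmin]; exact isPeriodicPt_minimalPeriod g _
          rw [this]
        have hfin := periodic_range_finite hn hYper
        have hfin' := periodic_range_finite (u := fun a => - Y a) hn (fun a => by rw [hYper])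
        obtain ⟨lo, -, hlo⟩ := exists_min_idx hfin (fun _ => True) ⟨0, trivial⟩
        obtain ⟨hi, -, hhi⟩ := exists_min_idx hfin' (fun _ => True) ⟨0, trivial⟩
        have hhi' : ∀ j, Y j ≤ Y hi := fun j => by have := hhi j trivial; linarith
        have hlo' : ∀ j, Y lo ≤ Y j := fun j => hlo j trivial
        have hlohi := hlo' hi
        let G : ℝ → ℝ := fun t => max (Y lo) (min (Y hi) (g t))
        have hGc : Continuous G := by fun_prop
        have hGlo : ∀ t, Y lo ≤ G t := fun t => le_max_left _ _
        have hGg : ∀ t, Y lo ≤ g t → g t ≤ Y hi → G t = g t := fun t h1 h2 => by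
          show max (Y lo) (min (Y hi) (g t)) = g t
          rw [min_eq_right h2, max_eq_right h1]
        have hGY : ∀ a, G^[a] |x| = Y a := by
          intro a
          induction a with
          | zero => rfl
          | succ a ih =>
            have e : g (Y a) = Y (a + 1) := (iterate_succ_apply' g a _).symm
            rw [iterate_succ_apply', ih, hGg _ (by rw [e]; exact hlo' _) (by rw [e]; exact hhi' _), e]
        have hGmin : minimalPeriod G |x| = n := by
          rw [← hgmin]
          exact minPer_conj (z := 0) (fun i => by rw [hGY, add_zero])
        obtain ⟨t, ht⟩ := hS G hGc ⟨_, hGmin⟩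
        have htper : t ∈ periodicPts G := minimalPeriod_pos_iff_mem_periodicPts.mp (by omega)
        have hxper : |x| ∈ periodicPts G := minimalPeriod_pos_iff_mem_periodicPts.mp (by omega)
        have hnohit : ∀ i a, G^[i] t ≠ Y a := by
          intro i a h
          have h1 := minimalPeriod_apply_iterate htper i
          have h2 := minimalPeriod_apply_iterate hxper a
          rw [hGY, ← h, h1, ht, hGmin] at h2
          exact hmn h2
        have hin : ∀ i, G (G^[i] t) = g (G^[i] t) := by
          intro i
          have e : G (G^[i] t) = G^[i + 1] t := (iterate_succ_apply' G i t).symm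
          apply hGg
          · by_contra hcon
            push Not at hcon
            apply hnohit (i + 1) lo
            rw [← e]
            show max (Y lo) (min (Y hi) (g (G^[i] t))) = Y lo
            exact max_eq_left ((min_le_right _ _).trans hcon.le)
          · by_contra hcon
            push Not at hcon
            apply hnohit (i + 1) hi
            rw [← e]
            show max (Y lo) (min (Y hi) (g (G^[i] t))) = Y hi
            rw [min_eq_left hcon.le, max_eq_right hlohi]
        have horb : ∀ i, g^[i] t = G^[i] t := by
          intro i
          induction i with
          | zero => rfl
          | succ i ih => rw [iterate_succ_apply', iterate_succ_apply', ih, hin]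
        refine ⟨t, ?_, ?_⟩
        · have h1 : G^[m] t = t := by rw [← ht]; exact isPeriodicPt_minimalPeriod G t
          obtain ⟨m', rfl⟩ : ∃ m', m = m' + 1 := ⟨m - 1, by omega⟩
          rw [iterate_succ_apply'] at h1
          have h2 := hGlo (G^[m'] t)
          rw [h1] at h2
          have h3 : 0 < Y lo := by
            simp only [Y]; rw [hga]; exact abs_pos.mpr (hx0 _)
          linarith
        · rw [← ht]
          exact minPer_conj (z := 0) (fun i => by rw [horb, add_zero])
    obtain ⟨t, ht, hmt⟩ := hfinal
    exact cycle_of_leg hF0 hs hl hsper hsc hkl ht hm hmt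
  · refine theoremH hF hF0 (u := fun i => F^[i] x) hx0 (fun t => ?_) hn hl hper
      (by rw [hcnt]; ring) hkl hsp m hm
    simp only [iterate_succ_apply']
    apply edge_self
    rw [← iterate_succ_apply' F]; exact hx0 _

theorem mainT {f : ℝ → ℝ} (hf : Continuous f) {x : ℝ} {q : ℕ} (hq : 2 ≤ q)
    (hx : minimalPeriod f x = q) {k l m : ℕ} (hk : 0 < k) (hk2 : 2 * k ≤ l)
    (hkl : Nat.Coprime k l) (hm : 0 < m)
    (H : ∀ p, 2 * p ≤ q → overCount f x q = 2 * p → p * l < k * q ∨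
      ∃ n, 0 < n ∧ q = n * l ∧ p = n * k ∧ Shar n m) : HP f (m * k) (m * l) := by
  obtain ⟨z, hz, h⟩ := front_transfer hf hq hx
  have hF := Fz_centered hf hz
  have hml : 2 ≤ m * l := by
    have : 1 * 2 ≤ m * l := Nat.mul_le_mul hm (by omega)
    omega
  apply back_transfer (z := z) hml
  rcases h with ⟨y, h1, h2, h3, h4, h5⟩ | h
  · have hyper : ∀ t, (Fz f z)^[t + q] y = (Fz f z)^[t] y := fun t => by
      rw [iterate_add_apply]
      have : (Fz f z)^[q] y = y := by rw [← h1]; exact isPeriodicPt_minimalPeriod _ y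
      rw [this]
    obtain ⟨p, hp⟩ := cnt_even h3 (N := q) (by
      have := hyper 0; rw [zero_add] at this; rw [this])
    have hp' : cnt (fun i => (Fz f z)^[i] y) q = 2 * p := by rw [hp]; ring
    have hle := cnt_le (fun i => (Fz f z)^[i] y) q
    rcases H p (by omega) (by omega) with hlt | ⟨n, hn, hqn, hpn, hS⟩
    · refine lemmaA hF h3 (fun t => ?_) (by omega) hyper hp' h4 h5 hkl hk2 hlt m hm
      rw [iterate_succ_apply']
      apply edge_self
      rw [← iterate_succ_apply' (Fz f z)]; exact h3 _
    · subst hqn hpn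
      exact lemmaB hF.cont hF.zero hn (by omega) hm h1 hp' h3 hkl hS
  · exact h k l hk hkl hk2 m hm

theorem shar_one {n : ℕ} (hn : 0 < n) : Shar n 1 := by
  rintro g hg ⟨x, hx⟩
  rcases Nat.lt_or_ge n 2 with h | h
  · exact ⟨x, by omega⟩
  · obtain ⟨z, hz, _⟩ := front_transfer hg h hx
    exact ⟨z, minimalPeriod_eq_one_iff_isFixedPt.mpr hz⟩

theorem shar_even {n m : ℕ} (hn : 0 < n) (hm : 0 < m) (h : Shar n m) : Shar (n * 2) (m * 2) := by
  rintro g hg ⟨x, hx⟩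
  obtain ⟨y, hy, _⟩ := mainT hg (q := n * 2) (k := 1) (l := 2) (m := m) (by omega) hx one_pos le_rfl
    (by norm_num) hm (fun p hp hc => by
      rcases Nat.lt_or_ge p n with h1 | h1
      · left; omega
      · right; exact ⟨n, hn, rfl, by omega, h⟩)
  exact ⟨y, hy⟩

theorem shar_odd_even {c m : ℕ} (hc : 0 < c) (hm : 0 < m) : Shar (2 * c + 1) (m * 2) := by
  rintro g hg ⟨x, hx⟩
  obtain ⟨y, hy, _⟩ := mainT hg (k := 1) (l := 2) (m := m) (by omega) hx one_pos le_rfl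
    (by norm_num) hm (fun p hp hc => by left; omega)
  exact ⟨y, hy⟩

theorem shar_odd_odd {c k : ℕ} (hc : 0 < c) (hk : c < k) : Shar (2 * c + 1) (2 * k + 1) := by
  rintro g hg ⟨x, hx⟩
  obtain ⟨y, hy, _⟩ := mainT hg (k := k) (l := 2 * k + 1) (m := 1) (by omega) hx (by omega)
    (by omega) (by simp) one_pos (fun p hp _ => by
      left
      have : p ≤ c := by omega
      nlinarith)
  rw [one_mul] at hy
  exact ⟨y, hy⟩

theorem shar_total (n : ℕ) : ∀ m, 0 < n → 0 < m → Shar n m ∨ Shar m n := by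
  induction n using Nat.strong_induction_on with
  | _ n ih =>
    intro m hn hm
    rcases Nat.even_or_odd' n with ⟨n', hn' | hn'⟩ <;> rcases Nat.even_or_odd' m with ⟨m', hm' | hm'⟩
    · rw [hn', hm', mul_comm 2, mul_comm 2]
      rcases ih n' (by omega) m' (by omega) (by omega) with h | h
      · exact Or.inl (shar_even (by omega) (by omega) h)
      · exact Or.inr (shar_even (by omega) (by omega) h)
    · rcases Nat.eq_zero_or_pos m' with h | h
      · left; subst h; rw [hm']; exact shar_one hn
      · right; rw [hn', hm', mul_comm 2 n']; exact shar_odd_even h (by omega)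
    · rcases Nat.eq_zero_or_pos n' with h | h
      · right; subst h; rw [hn']; exact shar_one hm
      · left; rw [hn', hm', mul_comm 2 m']; exact shar_odd_even h (by omega)
    · rcases Nat.eq_zero_or_pos m' with h | h
      · left; subst h; rw [hm']; exact shar_one hn
      · rcases Nat.eq_zero_or_pos n' with h' | h'
        · right; subst h'; rw [hn']; exact shar_one hm
        · rcases lt_trichotomy n' m' with h'' | h'' | h''
          · left; rw [hn', hm']; exact shar_odd_odd h' h''
          · left; rw [hn', hm', h'']; exact fun g _ hx => hx
          · right; rw [hn', hm']; exact shar_odd_odd h h''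

theorem forces_of_HP {p q r s : ℕ} (hs : 0 < s)
    (H : ∀ f : ℝ → ℝ, Continuous f → HP f p q → HP f r s) : OrpForces p q r s := by
  rintro a b hab f hf hmap ⟨x, hxI, hx1, hx2⟩
  let f' : ℝ → ℝ := fun t => f (Set.projIcc a b hab t)
  have hf' : Continuous f' := hf.comp_continuous (continuous_subtype_val.comp continuous_projIcc)
    (fun t => (Set.projIcc a b hab t).2)
  have hff : ∀ t ∈ Set.Icc a b, f' t = f t := fun t ht => by
    simp only [f']; rw [Set.projIcc_of_mem hab ht]
  have hIcc : ∀ t, f' t ∈ Set.Icc a b := fun t => hmap (Set.projIcc a b hab t).2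
  have horb : ∀ y ∈ Set.Icc a b, ∀ i, f'^[i] y = f^[i] y ∧ f^[i] y ∈ Set.Icc a b := by
    intro y hy i
    induction i with
    | zero => exact ⟨rfl, hy⟩
    | succ i ih =>
      rw [iterate_succ_apply', iterate_succ_apply', ih.1]
      exact ⟨hff _ ih.2, hmap ih.2⟩
  have hmin : ∀ y ∈ Set.Icc a b, minimalPeriod f' y = minimalPeriod f y := fun y hy =>
    minPer_conj (z := 0) (fun i => by rw [add_zero, (horb y hy i).1])
  have hoc : ∀ y ∈ Set.Icc a b, ∀ n, overCount f' y n = overCount f y n := by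
    intro y hy n
    unfold overCount
    congr 1
    apply Finset.filter_congr
    intro i _
    rw [(horb y hy i).1, (horb y hy (i + 1)).1, hff _ (horb y hy i).2, hff _ (horb y hy (i + 1)).2]
  obtain ⟨y, hy1, hy2⟩ := H f' hf' ⟨x, by rw [hmin x hxI, hx1], by rw [hoc x hxI, hx2]⟩
  have hyI : y ∈ Set.Icc a b := by
    have h1 : f'^[s] y = y := by rw [← hy1]; exact isPeriodicPt_minimalPeriod _ y
    obtain ⟨s', rfl⟩ : ∃ s', s = s' + 1 := ⟨s - 1, by omega⟩
    rw [iterate_succ_apply'] at h1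
    rw [← h1]; exact hIcc _
  exact ⟨y, hyI, by rw [← hmin y hyI, hy1], by rw [← hoc y hyI, hy2]⟩

theorem forces_lt {p q r s : ℕ} (hp : 0 < p) (hr : 0 < r) (hs : 0 < s)
    (hpq : 2 * p ≤ q) (hrs : 2 * r ≤ s) (h : p * s < r * q) : OrpForces p q r s := by
  refine forces_of_HP hs ?_
  rintro f hf ⟨x, hx1, hx2⟩
  obtain ⟨k, l, hkl, hk, hl⟩ := Nat.exists_coprime r s
  have hg : 0 < Nat.gcd r s := Nat.gcd_pos_of_pos_left _ hr
  set g := Nat.gcd r s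
  rw [hk, hl, mul_comm k, mul_comm l]
  have hk0 : 0 < k := Nat.pos_of_ne_zero (by rintro rfl; simp at hk; omega)
  have hk2 : 2 * k ≤ l := by
    rw [hk, hl, ← mul_assoc] at hrs
    exact Nat.le_of_mul_le_mul_right hrs hg
  refine mainT hf (by omega) hx1 hk0 hk2 hkl hg (fun p' _ hp' => Or.inl ?_)
  have : p' = p := by omega
  subst this
  rw [hk, hl] at h
  apply Nat.lt_of_mul_lt_mul_right (a := g)
  calc p' * l * g = p' * (l * g) := by ring
    _ < k * g * q := h
    _ = k * q * g := by ring

theorem forces_eq {n m k l : ℕ} (hn : 0 < n) (hm : 0 < m) (hk : 0 < k) (hk2 : 2 * k ≤ l)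
    (hkl : Nat.Coprime k l) (hS : Shar n m) : OrpForces (n * k) (n * l) (m * k) (m * l) := by
  refine forces_of_HP (Nat.mul_pos hm (by omega)) ?_
  rintro f hf ⟨x, hx1, hx2⟩
  have hnl : 2 ≤ n * l := by
    have : 1 * 2 ≤ n * l := Nat.mul_le_mul hn (by omega)
    omega
  exact mainT hf hnl hx1 hk hk2 hkl hm (fun p' _ hp' => Or.inr ⟨n, hn, rfl, by omega, hS⟩)

/-- **Forcing among over-rotation pairs is a linear ordering.** -/
theorem orpForces_total (p q r s : ℕ) (hp : 0 < p) (hq : 0 < q) (hr : 0 < r) (hs : 0 < s)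
    (hpq : 2 * p ≤ q) (hrs : 2 * r ≤ s) :
    OrpForces p q r s ∨ OrpForces r s p q := by
  rcases lt_trichotomy (p * s) (r * q) with h | h | h
  · exact Or.inl (forces_lt hp hr hs hpq hrs h)
  · obtain ⟨k, l, hkl, hk, hl⟩ := Nat.exists_coprime r s
    have hg : 0 < Nat.gcd r s := Nat.gcd_pos_of_pos_left _ hr
    set g := Nat.gcd r s
    have hk0 : 0 < k := Nat.pos_of_ne_zero (by rintro rfl; simp at hk; omega)
    have hk2 : 2 * k ≤ l := by
      rw [hk, hl, ← mul_assoc] at hrs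
      exact Nat.le_of_mul_le_mul_right hrs hg
    have hl0 : 0 < l := by omega
    have h1 : p * l = k * q := by
      apply Nat.eq_of_mul_eq_mul_right hg
      rw [hk, hl] at h
      calc p * l * g = p * (l * g) := by ring
        _ = k * g * q := h
        _ = k * q * g := by ring
    have h2 : l ∣ q := hkl.symm.dvd_of_dvd_mul_left (Dvd.intro_left p h1)
    obtain ⟨n, hn⟩ := h2
    have hn0 : 0 < n := Nat.pos_of_ne_zero (by rintro rfl; simp at hn; omega)
    have h3 : p = n * k := by
      apply Nat.eq_of_mul_eq_mul_right hl0
      rw [h1, hn]; ring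
    rw [hk, hl, h3, hn, mul_comm k g, mul_comm l g, mul_comm l n]
    rcases shar_total n g hn0 hg with hS | hS
    · exact Or.inl (forces_eq hn0 hg hk0 hk2 hkl hS)
    · exact Or.inr (forces_eq hg hn0 hk0 hk2 hkl hS)
  · exact Or.inr (forces_lt hr hp hq hrs hpq h)
end
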